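/- arXiv:2311.00411 — 2 statements merged into one kernel-verified Lean document; each statement's English description precedes it below -/
import Mathlib

section
/- Let k be a field whose theory is model complete in the language of rings L_ring = {0, 1, +, ·}. Then k is perfect, i.e. either k has characteristic 0, or k has characteristic p > 0 and every element of k has a p-th root in k. -/
/-!
In characteristic `p > 0` the Frobenius map `x ↦ x ^ p` embeds any field `M` into itself, as a
structure for the language of rings. If `M` is a model of the model complete theory of `k`, this
embedding is elementary. The formula saying that `x` is a `p`-th power holds at the image `a ^ p` of every
`a`, hence holds already at `a`, so `M` is perfect; this is
`exists_pow_eq_of_theoryIsModelComplete`.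

Model completeness is only assumed for models in the universe `w`, where `k` itself need not live.
If `k` is finite, it is perfect anyway. If `k` is infinite, the Löwenheim–Skolem theorem provides a
model `M` in the universe `w` that is elementarily equivalent to `k`; being a field, having
characteristic `p` and being perfect are all first-order, so they pass between `k` and `M`.
-/

open FirstOrder Language FirstOrder.Ring

universe w

/-- A theory `T` is model complete if every embedding between models of `T` is elementary. -/
def TheoryIsModelComplete {L : FirstOrder.Language} (T : L.Theory) : Prop :=
  ∀ (M N : Type w) [L.Structure M] [L.Structure N], M ⊨ T → N ⊨ T →
    ∀ f : M ↪[L] N, ∀ (n : ℕ) (φ : L.Formula (Fin n)) (x : Fin n → M),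
      φ.Realize (f ∘ x) ↔ φ.Realize x

/-- The formula `∃ y, y ^ p = x` in the free variable `x`. -/
noncomputable def hasRootFormula (p : ℕ) : Language.ring.Formula (Fin 1) :=
  BoundedFormula.ex (Term.bdEqual
    (termOfFreeCommRing (FreeCommRing.of (Sum.inr 0 : Fin 1 ⊕ Fin 1) ^ p))
    (Term.var (Sum.inl 0)))

/-- The sentence `∀ x, ∃ y, y ^ p = x`. -/
noncomputable def allHaveRoot (p : ℕ) : Language.ring.Sentence :=
  BoundedFormula.all (BoundedFormula.ex (Term.bdEqual
    (termOfFreeCommRing (FreeCommRing.of (Sum.inr 1 : Empty ⊕ Fin 2) ^ p))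
    (Term.var (Sum.inr 0))))

theorem realize_hasRootFormula {M : Type*} [CommRing M] [CompatibleRing M] (p : ℕ)
    (x : Fin 1 → M) : (hasRootFormula p).Realize x ↔ ∃ y : M, y ^ p = x 0 := by
  simp [hasRootFormula, Formula.Realize, Fin.snoc]

theorem realize_allHaveRoot {M : Type*} [CommRing M] [CompatibleRing M] (p : ℕ) :
    M ⊨ allHaveRoot p ↔ ∀ x : M, ∃ y : M, y ^ p = x := by
  simp [allHaveRoot, Sentence.Realize, Formula.Realize, Fin.snoc]

/-- The Frobenius endomorphism of a field, as an embedding in the language of rings. -/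
def frobeniusEmbedding (M : Type*) [Field M] [CompatibleRing M] (p : ℕ) [Fact p.Prime]
    [CharP M p] : M ↪[Language.ring] M where
  toFun := frobenius M p
  inj' := (frobenius M p).injective
  map_fun' := fun {n} f => by
    cases f <;> simp
  map_rel' := fun {n} f => by cases f

theorem exists_pow_eq_of_theoryIsModelComplete {T : Language.ring.Theory}
    (hmc : TheoryIsModelComplete.{w} T) (M : Type w) [Field M] [CompatibleRing M]
    (hM : M ⊨ T) (p : ℕ) [Fact p.Prime] [CharP M p] (a : M) : ∃ b : M, b ^ p = a := by
  have h := hmc M M hM hM (frobeniusEmbedding M p) 1 (hasRootFormula p) (fun _ => a)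
  rw [realize_hasRootFormula, realize_hasRootFormula] at h
  exact h.1 ⟨a, rfl⟩

/-- Let `k` be a field whose theory is model complete in the language of
rings.  Then `k` is perfect: either `k` has characteristic `0`, or `k` has characteristic
`p > 0` and every element of `k` has a `p`-th root in `k`. -/
theorem field_model_complete_is_perfect
    (k : Type*) [Field k]
    (hmc : TheoryIsModelComplete.{w}
      (@FirstOrder.Language.completeTheory Language.ring k (compatibleRingOfRing k).toStructure)) :
    CharZero k ∨ ∃ p : ℕ, p.Prime ∧ CharP k p ∧ ∀ a : k, ∃ b : k, b ^ p = a := by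
  let := compatibleRingOfRing k
  obtain ⟨p, hchar⟩ := CharP.exists k
  rcases CharP.char_is_prime_or_zero k p with hp | rfl
  · refine Or.inr ⟨p, hp, hchar, ?_⟩
    have : Fact p.Prime := ⟨hp⟩
    rcases finite_or_infinite k with hfin | hinf
    · exact surjective_frobenius k p
    · obtain ⟨N, hN, -⟩ := exists_elementarilyEquivalent_card_eq Language.ring k
        Cardinal.aleph0.{w} le_rfl (by
          rw [Cardinal.lift_aleph0, Cardinal.lift_le_aleph0]
          exact Cardinal.mk_le_aleph0)
      have : (Theory.fieldOfChar p).Model N := hN.theory_model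
      have : Theory.field.Model N := hN.theory_model
      let : Field N := Field.fieldOfModelField N
      let : CompatibleRing N := Field.compatibleRingOfModelField N
      have : CharP N p := Field.charP_of_model_fieldOfChar p N
      have hroot : N ⊨ allHaveRoot p := (realize_allHaveRoot p).2
        (exists_pow_eq_of_theoryIsModelComplete hmc N
          (show N ⊨ Language.ring.completeTheory k from hN.theory_model) p)
      exact (realize_allHaveRoot p).1 ((hN.realize_sentence _).2 hroot)
  · exact Or.inl (CharP.charP_to_charZero k)
end

section
/- Let p be a prime and let k₁ ⊆ k₂ be perfect fields of characteristic p such that k₁ is an elementary substructure of k₂ in the language of rings. Then the induced embedding of the fraction field of W(k₁) into the fraction field of W(k₂) (arising from the ring homomorphism W(k₁) → W(k₂) induced by the inclusion k₁ ⊆ k₂) is an elementary embedding in the language of rings. -/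
/-!
The proof is an Ax–Kochen–Ershov argument carried out by back-and-forth between ultrapowers.

By the theorem of Łoś it suffices to compare the ultrapowers of the two fraction fields along a
nonprincipal ultrafilter on `ℕ`. These ultrapowers are countably saturated, and they carry the
coarse valuation `cval` obtained from the `p`-adic one by inverting `p`. It has residue
characteristic zero (`resCharZero_cval`), and it is henselian (`isHenselVal_cval`) because the
Witt vectors over the ring of sequences in `k` are `p`-adically complete. A nonzero element of the
ultrapower is, up to an element of `1 + 𝔪`, a nonstandard power of `p` times a Witt vector over the
ultrapower of the residue field. A partial map between the ultrapowers of `k₁` and `k₂`, given by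
two embeddings of a perfect field `L`, therefore determines a correspondence `wittCorr` of leading
terms, and this correspondence is saturated (`wittCorr_saturated`).

In residue characteristic zero, a partial isomorphism of henselian fields that respects leading
terms extends to every countable relatively algebraically closed subfield whose leading terms all
have a match (`Corr.exists_extension`). The key point is `Corr.eval_mem`: expanding a polynomial
around the closest root of one of its Hasse derivatives, its value at a new point has no
cancellation, so its leading term is determined by those of the Taylor coefficients. Algebraic elements are
handled by the Newton form of Hensel's lemma (`Corr.exists_root_match`), and Zorn's lemma finishes.

An elementary partial map of the residue fields can be enlarged by saturation
(`IsElem.exists_extension`), which supplies the missing matches of leading terms. Hence the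
positions `IsPosition` have the back-and-forth property (`IsPosition.forth`, `IsPosition.back`) and
preserve all formulas (`IsPosition.realize_iff`). Since `k₁ → k₂` is elementary, any countable part
of the graph of the induced map on fraction fields lies in a position (`exists_position`).
-/

open FirstOrder Language FirstOrder.Ring

noncomputable section

variable (p : ℕ) [Fact p.Prime] (k₁ k₂ : Type*) [Field k₁] [Field k₂]
  [CharP k₁ p] [CharP k₂ p] [PerfectRing k₁ p] [PerfectRing k₂ p]

/-- The embedding of fraction fields of the `p`-typical Witt vector rings induced by a
ring embedding `g : k₁ →+* k₂`. -/
def wittFractionMap (g : k₁ →+* k₂) :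
    FractionRing (WittVector p k₁) →+* FractionRing (WittVector p k₂) :=
  IsFractionRing.lift
    (g := (algebraMap (WittVector p k₂) (FractionRing (WittVector p k₂))).comp
      (WittVector.map g))
    (by
      intro x y hxy
      simp only [RingHom.comp_apply] at hxy
      exact WittVector.map_injective g g.injective
        (IsFractionRing.injective (WittVector p k₂) (FractionRing (WittVector p k₂)) hxy))

section Proof
open Polynomial

set_option linter.unusedSectionVars false

/-! ### Henselian valuations and rescaled polynomials -/

lemma eval_hasseDeriv_hasseDeriv {R : Type*} [CommRing R] (h : R[X]) (a : R) (n j : ℕ) :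
    (hasseDeriv n (hasseDeriv j h)).eval a =
      ((n + j).choose j : R) * (hasseDeriv (n + j) h).eval a := by
  have := LinearMap.congr_fun (hasseDeriv_comp (R := R) n j) h
  rw [LinearMap.comp_apply, LinearMap.smul_apply] at this
  rw [this, eval_smul, nsmul_eq_mul, Nat.choose_symm_add]

section Valued
variable {K Γ : Type*} [Field K] [LinearOrderedCommGroupWithZero Γ] (v : Valuation K Γ)

/-- Newton form of Hensel's lemma for a valuation `v`: a `v`-integral polynomial whose constant
coefficient is small and whose linear coefficient is a unit has a small root. -/
def IsHenselVal : Prop :=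
  ∀ q : K[X], (∀ i, v (q.coeff i) ≤ 1) → v (q.coeff 0) < 1 → v (q.coeff 1) = 1 →
    ∃ z, v z < 1 ∧ q.eval z = 0

/-- The residue field of `v` has characteristic zero. -/
def ResCharZero : Prop := ∀ n : ℕ, n ≠ 0 → v (n : K) = 1

variable {v}

lemma val_natCast_le (hn : ResCharZero v) (n : ℕ) : v (n : K) ≤ 1 := by
  rcases eq_or_ne n 0 with rfl | h
  · simp
  · exact (hn n h).le

lemma val_taylor_le (hn : ResCharZero v) {q : K[X]} (hq : ∀ i, v (q.coeff i) ≤ 1) {r : K}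
    (hr : v r ≤ 1) (i : ℕ) : v ((taylor r q).coeff i) ≤ 1 := by
  rw [taylor_coeff, eval_eq_sum_range]
  refine v.map_sum_le fun j _ => ?_
  rw [hasseDeriv_coeff, map_mul, map_mul, map_pow]
  exact mul_le_one' (mul_le_one' (val_natCast_le hn _) (hq _)) (pow_le_one' hr _)

lemma val_taylor_lt (hn : ResCharZero v) {q : K[X]} (hq : ∀ i, v (q.coeff i) < 1) {r : K}
    (hr : v r ≤ 1) (i : ℕ) : v ((taylor r q).coeff i) < 1 := by
  rw [taylor_coeff, eval_eq_sum_range]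
  refine v.map_sum_lt one_ne_zero fun j _ => ?_
  rw [hasseDeriv_coeff, map_mul, map_mul, map_pow]
  exact mul_lt_one_of_nonneg_of_lt_one_left zero_le
    (mul_lt_one_of_nonneg_of_lt_one_right (val_natCast_le hn _) zero_le (hq _))
    (pow_le_one' hr _)

/-- If the residue polynomial of an integral `q` is nonzero but vanishes at `1`, then, `e` being
the multiplicity of that root, the `(e-1)`-st Hasse derivative of `q` has a simple residual
root at `1`, which Hensel's lemma lifts. -/
lemma exists_root_hasseDeriv (hn : ResCharZero v) (hv : IsHenselVal v) {q : K[X]}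
    (hq : ∀ i, v (q.coeff i) ≤ 1) (hu : ∃ i, v (q.coeff i) = 1) (h1 : v (q.eval 1) < 1) :
    ∃ j z, v ((taylor 1 q).coeff (j + 1)) = 1 ∧ v z < 1 ∧ (hasseDeriv j q).eval (1 + z) = 0 := by
  have hle := val_taylor_le hn hq (r := 1) (by simp)
  have hex : ∃ i, v ((taylor 1 q).coeff i) = 1 := by
    by_contra! hcon
    obtain ⟨i, hi⟩ := hu
    have := val_taylor_lt hn (fun i => lt_of_le_of_ne (hle i) (hcon i)) (r := -1) (by simp) i
    rw [taylor_taylor, neg_add_cancel, taylor_zero] at this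
    exact this.ne hi
  classical
  obtain ⟨he, hmin⟩ := And.intro (Nat.find_spec hex) (fun m => Nat.find_min hex (m := m))
  generalize Nat.find hex = e at he hmin
  obtain _ | j := e
  · rw [taylor_coeff_zero] at he
    exact absurd he h1.ne
  have hcomm : hasseDeriv j (taylor 1 q) = taylor 1 (hasseDeriv j q) := by
    ext n
    rw [hasseDeriv_coeff, taylor_coeff, taylor_coeff]
    rw [eval_hasseDeriv_hasseDeriv]
  obtain ⟨z, hz, hz0⟩ := hv (hasseDeriv j (taylor 1 q))
    (fun i => by
      rw [hasseDeriv_coeff, map_mul]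
      exact mul_le_one' (val_natCast_le hn _) (hle _))
    (by
      rw [hasseDeriv_coeff, map_mul]
      refine mul_lt_one_of_nonneg_of_lt_one_right (val_natCast_le hn _) zero_le
        (lt_of_le_of_ne (hle _) ?_)
      exact hmin _ (by omega))
    (by
      rw [hasseDeriv_coeff, map_mul, hn _ (Nat.choose_pos (by omega)).ne', one_mul, add_comm 1 j,
        he])
  refine ⟨j, z, he, hz, ?_⟩
  rw [hcomm, taylor_eval] at hz0
  rwa [add_comm]

end Valued

section rescale
variable {R : Type*} [CommRing R]

/-- The polynomial `Z ↦ c * h (a + d * Z)`. -/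
noncomputable def rescale (c a d : R) (h : R[X]) : R[X] := C c * (taylor a h).comp (C d * X)

lemma rescale_coeff (c a d : R) (h : R[X]) (i : ℕ) :
    (rescale c a d h).coeff i = c * ((taylor a h).coeff i * d ^ i) := by
  rw [rescale, coeff_C_mul, comp_C_mul_X_coeff]

lemma rescale_eval (c a d : R) (h : R[X]) (z : R) :
    (rescale c a d h).eval z = c * h.eval (a + d * z) := by
  simp [rescale, eval_comp, taylor_eval, add_comm]

lemma map_rescale {S : Type*} [CommRing S] (f : R →+* S) (c a d : R) (h : R[X]) :
    (rescale c a d h).map f = rescale (f c) (f a) (f d) (h.map f) := by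
  simp [rescale, Polynomial.map_comp]

lemma hasseDeriv_rescale (c a d : R) (h : R[X]) (j : ℕ) :
    hasseDeriv j (rescale c a d h) = rescale (c * d ^ j) a d (hasseDeriv j h) := by
  ext n
  rw [hasseDeriv_coeff, rescale_coeff, rescale_coeff, taylor_coeff, taylor_coeff]
  rw [eval_hasseDeriv_hasseDeriv]
  ring

lemma taylor_coeff_mem (N : Subring R) {q : R[X]} (hq : ∀ i, q.coeff i ∈ N) {r : R} (hr : r ∈ N)
    (i : ℕ) : (taylor r q).coeff i ∈ N := by
  rw [taylor_coeff, eval_eq_sum_range]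
  refine sum_mem fun j _ => mul_mem ?_ (pow_mem hr _)
  rw [hasseDeriv_coeff]
  exact mul_mem (natCast_mem _ _) (hq _)

end rescale

/-! ### Correspondences of leading terms -/

section Corr
variable {K₁ K₂ Γ₁ Γ₂ : Type*} [Field K₁] [Field K₂]
  [LinearOrderedCommGroupWithZero Γ₁] [LinearOrderedCommGroupWithZero Γ₂]

/-- A correspondence between the leading terms of two valued fields. The set `M` consists of the
pairs with matching leading terms (that is, matching classes modulo `1 + 𝔪`), and `N` of the
integral pairs with matching residues. -/
structure Corr (v₁ : Valuation K₁ Γ₁) (v₂ : Valuation K₂ Γ₂) where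
  M : Set (K₁ × K₂)
  N : Subring (K₁ × K₂)
  zero_mem : (0 : K₁ × K₂) ∈ M
  mul_mem : ∀ {a b}, a ∈ M → b ∈ M → a * b ∈ M
  inv_mem : ∀ {a}, a ∈ M → a⁻¹ ∈ M
  zero_iff : ∀ {a}, a ∈ M → (a.1 = 0 ↔ a.2 = 0)
  le_one_iff : ∀ {a}, a ∈ M → (v₁ a.1 ≤ 1 ↔ v₂ a.2 ≤ 1)
  N_of_M : ∀ {a}, a ∈ M → v₁ a.1 ≤ 1 → a ∈ N
  M_of_N : ∀ {a}, a ∈ N → v₁ a.1 = 1 → a ∈ M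
  N_le : ∀ {a}, a ∈ N → v₂ a.2 ≤ 1
  N_lt : ∀ {a}, a ∈ N → v₁ a.1 < 1 → v₂ a.2 < 1
  one_add : ∀ {b}, v₂ b < 1 → ((1, 1 + b) : K₁ × K₂) ∈ M

variable {v₁ : Valuation K₁ Γ₁} {v₂ : Valuation K₂ Γ₂} (c : Corr v₁ v₂)

namespace Corr

lemma one_mem : (1 : K₁ × K₂) ∈ c.M := c.M_of_N c.N.one_mem (by simp)

lemma pow_mem {a : K₁ × K₂} (ha : a ∈ c.M) (n : ℕ) : a ^ n ∈ c.M := by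
  induction n with
  | zero => simpa using c.one_mem
  | succ n ih => rw [pow_succ]; exact c.mul_mem ih ha

lemma ne_zero {a : K₁ × K₂} (ha : a ∈ c.M) (h : a.1 ≠ 0) : a.2 ≠ 0 :=
  fun h2 => h ((c.zero_iff ha).2 h2)

lemma mul_inv_cancel {a : K₁ × K₂} (ha : a ∈ c.M) (h : a.1 ≠ 0) : a * a⁻¹ = 1 :=
  Prod.ext (mul_inv_cancel₀ h) (mul_inv_cancel₀ (c.ne_zero ha h))

lemma val_le_iff {a b : K₁ × K₂} (ha : a ∈ c.M) (hb : b ∈ c.M) (h : b.1 ≠ 0) :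
    v₁ a.1 ≤ v₁ b.1 ↔ v₂ a.2 ≤ v₂ b.2 := by
  have := c.le_one_iff (c.mul_mem ha (c.inv_mem hb))
  simp only [Prod.fst_mul, Prod.snd_mul, Prod.fst_inv, Prod.snd_inv, map_mul, map_inv₀] at this
  rwa [← div_eq_mul_inv, ← div_eq_mul_inv, div_le_one₀, div_le_one₀] at this
  · exact zero_lt_iff.2 ((v₂.ne_zero_iff).2 (c.ne_zero hb h))
  · exact zero_lt_iff.2 ((v₁.ne_zero_iff).2 h)

lemma val_eq_one {a : K₁ × K₂} (ha : a ∈ c.M) (h : v₁ a.1 = 1) : v₂ a.2 = 1 := by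
  have h0 : a.1 ≠ 0 := by
    rintro h0
    simp [h0] at h
  apply le_antisymm
  · simpa using (c.val_le_iff ha c.one_mem (by simp)).1 (by simp [h])
  · simpa using (c.val_le_iff c.one_mem ha h0).1 (by simp [h])

/-- Matching leading terms add up as long as there is no cancellation. -/
lemma add_mem {a b : K₁ × K₂} (ha : a ∈ c.M) (hb : b ∈ c.M)
    (h1 : v₁ a.1 ≤ v₁ (a + b).1) (h2 : v₁ b.1 ≤ v₁ (a + b).1) : a + b ∈ c.M := by
  wlog hab : v₁ b.1 ≤ v₁ a.1 generalizing a b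
  · rw [add_comm] at h1 h2 ⊢
    exact this hb ha h2 h1 (le_of_not_ge hab)
  rcases eq_or_ne a.1 0 with h0 | h0
  · have hb0 : b.1 = 0 := by
      rw [h0, map_zero] at hab
      exact (v₁.zero_iff).1 (le_antisymm hab zero_le)
    have e1 : a = 0 := Prod.ext h0 ((c.zero_iff ha).1 h0)
    have e2 : b = 0 := Prod.ext hb0 ((c.zero_iff hb).1 hb0)
    simpa [e1, e2] using c.zero_mem
  have hv : v₁ a.1 ≠ 0 := (v₁.ne_zero_iff).2 h0
  have hmem : (a + b) * a⁻¹ ∈ c.N := by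
    rw [add_mul, c.mul_inv_cancel ha h0]
    refine c.N.add_mem c.N.one_mem (c.N_of_M (c.mul_mem hb (c.inv_mem ha)) ?_)
    simp only [Prod.fst_mul, Prod.fst_inv, map_mul, map_inv₀]
    rw [← div_eq_mul_inv]
    exact div_le_one_of_le₀ hab zero_le
  have heq : v₁ (a + b).1 = v₁ a.1 :=
    le_antisymm ((v₁.map_add a.1 b.1).trans (max_le le_rfl hab)) h1
  have := c.mul_mem (c.M_of_N hmem (by
    simp only [Prod.fst_mul, Prod.fst_inv, map_mul, map_inv₀]
    rw [heq, mul_inv_cancel₀ hv])) ha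
  rwa [mul_assoc, mul_comm a⁻¹, c.mul_inv_cancel ha h0, mul_one] at this

/-- A pair keeps matching leading terms when its second entry is moved by a relatively small
amount. -/
lemma perturb {a : K₁ × K₂} (ha : a ∈ c.M) {b : K₂} (h : v₂ b < v₂ a.2) :
    ((a.1, a.2 + b) : K₁ × K₂) ∈ c.M := by
  have h0 : a.2 ≠ 0 := by
    rintro h0
    simp [h0] at h
  have hb : v₂ (b / a.2) < 1 := by
    rw [map_div₀]
    exact (div_lt_one₀ (zero_lt_iff.2 ((v₂.ne_zero_iff).2 h0))).2 h
  convert! c.mul_mem ha (c.one_add hb) using 1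
  refine Prod.ext (by simp) ?_
  simp only [Prod.snd_mul]
  field_simp

end Corr

/-- If `h` suffers cancellation at `x` when expanded around `a`, then some Hasse derivative
of `h` has a root closer to `x` than `a`. -/
lemma exists_closer_root (hn : ResCharZero v₁) (hv : IsHenselVal v₁) {h : K₁[X]} {a x l : K₁}
    (hax : x - a ≠ 0) (hq : ∀ i, v₁ ((rescale l⁻¹ a (x - a) h).coeff i) ≤ 1)
    (hu : ∃ i, v₁ ((rescale l⁻¹ a (x - a) h).coeff i) = 1)
    (h1 : v₁ ((rescale l⁻¹ a (x - a) h).eval 1) < 1) :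
    ∃ j β, hasseDeriv j h ≠ 0 ∧ (hasseDeriv j h).eval β = 0 ∧ v₁ (x - β) < v₁ (x - a) ∧
      v₁ ((taylor 1 (rescale l⁻¹ a (x - a) h)).coeff (j + 1)) = 1 := by
  obtain ⟨j, z, hj, hz, hr⟩ := exists_root_hasseDeriv hn hv hq hu h1
  have hl : l ≠ 0 := by
    rintro rfl
    obtain ⟨i, hi⟩ := hu
    simp [rescale_coeff] at hi
  refine ⟨j, a + (x - a) * (1 + z), ?_, ?_, ?_, hj⟩
  · intro h0
    have h2 : hasseDeriv j (rescale l⁻¹ a (x - a) h) = 0 := by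
      rw [hasseDeriv_rescale, h0]
      ext i
      simp [rescale_coeff]
    have h3 := eval_hasseDeriv_hasseDeriv (rescale l⁻¹ a (x - a) h) 1 1 j
    rw [h2, add_comm 1 j] at h3
    have h4 := congrArg v₁ h3
    rw [taylor_coeff] at hj
    rw [map_mul, hj, hn _ (Nat.choose_pos (by omega)).ne'] at h4
    simp at h4
  · rw [hasseDeriv_rescale, rescale_eval] at hr
    have : l⁻¹ * (x - a) ^ j ≠ 0 := mul_ne_zero (inv_ne_zero hl) (pow_ne_zero _ hax)
    exact (mul_eq_zero.1 hr).resolve_left this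
  · have : x - (a + (x - a) * (1 + z)) = -((x - a) * z) := by ring
    rw [this, Valuation.map_neg, map_mul]
    exact mul_lt_of_lt_one_right (zero_lt_iff.2 ((v₁.ne_zero_iff).2 hax)) hz

namespace Corr

/-- Normalised expansion of `h` at `z` around a centre `a`: after division by its dominant
term `l`, all coefficients have matching residues. -/
lemma exists_normalization {G : Subring (K₁ × K₂)} (hG : (G : Set (K₁ × K₂)) ⊆ c.M)
    {a z : K₁ × K₂} (ha : a ∈ G) (hz : z - a ∈ c.M) (hza : z.1 - a.1 ≠ 0)
    {h : (K₁ × K₂)[X]} (hh : ∀ i, h.coeff i ∈ G) (h0 : h.map (RingHom.fst K₁ K₂) ≠ 0) :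
    ∃ l ∈ c.M, l.1 ≠ 0 ∧ (∀ i, (rescale l⁻¹ a (z - a) h).coeff i ∈ c.N) ∧
      (∀ i, v₁ ((rescale l⁻¹ a (z - a) h).coeff i).1 ≤ 1) ∧
      ∃ i, v₁ ((rescale l⁻¹ a (z - a) h).coeff i).1 = 1 := by
  set f : ℕ → K₁ × K₂ := fun i => (taylor a h).coeff i * (z - a) ^ i with hf
  have hfM : ∀ i, f i ∈ c.M := fun i =>
    c.mul_mem (hG (taylor_coeff_mem G hh ha i)) (c.pow_mem hz i)
  obtain ⟨m, -, hm⟩ := Finset.exists_max_image (Finset.range (h.natDegree + 1))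
    (fun i => v₁ (f i).1) ⟨0, by simp⟩
  have hmax : ∀ i, v₁ (f i).1 ≤ v₁ (f m).1 := by
    intro i
    by_cases hi : i ∈ Finset.range (h.natDegree + 1)
    · exact hm i hi
    · have : f i = 0 := by
        rw [hf]
        simp only
        rw [coeff_eq_zero_of_natDegree_lt, zero_mul]
        rw [natDegree_taylor]
        simpa using hi
      simp [this]
  have hne : (f m).1 ≠ 0 := by
    intro hm0
    apply h0
    rw [← taylor_eq_zero a.1]
    ext i
    have h1 : (f i).1 = 0 := by
      have := hmax i
      rw [hm0, map_zero] at this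
      exact (v₁.zero_iff).1 (le_antisymm this zero_le)
    have h2 : ((taylor a h).coeff i).1 * (z.1 - a.1) ^ i = 0 := by simpa [hf] using h1
    have h3 := (mul_eq_zero.1 h2).resolve_right (pow_ne_zero _ hza)
    have h4 : taylor a.1 (h.map (RingHom.fst K₁ K₂)) = (taylor a h).map (RingHom.fst K₁ K₂) := by
      rw [map_taylor]; rfl
    rw [h4, coeff_map, coeff_zero]
    exact h3
  have hvne : v₁ (f m).1 ≠ 0 := (v₁.ne_zero_iff).2 hne
  have hco : ∀ i, (rescale (f m)⁻¹ a (z - a) h).coeff i = (f m)⁻¹ * f i := fun i =>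
    rescale_coeff _ _ _ _ _
  have hle : ∀ i, v₁ ((f m)⁻¹ * f i).1 ≤ 1 := by
    intro i
    rw [Prod.fst_mul, Prod.fst_inv, map_mul, map_inv₀, mul_comm, ← div_eq_mul_inv]
    exact div_le_one_of_le₀ (hmax i) zero_le
  refine ⟨f m, hfM m, hne, fun i => ?_, fun i => ?_, m, ?_⟩
  · rw [hco]
    exact c.N_of_M (c.mul_mem (c.inv_mem (hfM m)) (hfM i)) (hle i)
  · rw [hco]
    exact hle i
  · rw [hco, Prod.fst_mul, Prod.fst_inv, map_mul, map_inv₀, inv_mul_cancel₀ hvne]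

/-- Roots of the Hasse derivatives of `h` of order at least `m`. -/
noncomputable def derivRoots {K : Type*} [Field K] (m : ℕ) (h : K[X]) : Finset K :=
  letI := Classical.decEq K
  (Finset.Icc m h.natDegree).biUnion fun j => (hasseDeriv j h).roots.toFinset

lemma mem_derivRoots {K : Type*} [Field K] {m : ℕ} {h : K[X]} {β : K} :
    β ∈ derivRoots m h ↔ ∃ j, m ≤ j ∧ hasseDeriv j h ≠ 0 ∧ (hasseDeriv j h).eval β = 0 := by
  classical
  simp only [derivRoots, Finset.mem_biUnion, Finset.mem_Icc, Multiset.mem_toFinset]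
  constructor
  · rintro ⟨j, hj, hb⟩
    have := mem_roots'.1 hb
    exact ⟨j, hj.1, this.1, this.2⟩
  · rintro ⟨j, hj, h0, hb⟩
    refine ⟨j, ⟨hj, ?_⟩, mem_roots'.2 ⟨h0, hb⟩⟩
    by_contra hlt
    exact h0 (hasseDeriv_eq_zero_of_lt_natDegree _ _ (not_le.1 hlt))

/-- Among a given centre and finitely many roots lying in (the first projection of) `G`, there is
one closest to `x`. -/
lemma exists_closest {G : Subring (K₁ × K₂)} (x : K₁) {a₀ : K₁ × K₂} (ha₀ : a₀ ∈ G) (s : Finset K₁)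
    (hs : ∀ β ∈ s, ∃ b ∈ G, b.1 = β) :
    ∃ a ∈ G, v₁ (x - a.1) ≤ v₁ (x - a₀.1) ∧ ∀ β ∈ s, v₁ (x - a.1) ≤ v₁ (x - β) := by
  classical
  obtain ⟨β, hβ, hmin⟩ := Finset.exists_min_image (insert a₀.1 s) (fun β => v₁ (x - β))
    ⟨a₀.1, by simp⟩
  obtain ⟨a, ha, rfl⟩ : ∃ a ∈ G, a.1 = β := by
    rcases Finset.mem_insert.1 hβ with rfl | hβ
    · exact ⟨a₀, ha₀, rfl⟩
    · exact hs β hβ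
  exact ⟨a, ha, hmin _ (by simp), fun β hβ => hmin _ (Finset.mem_insert_of_mem hβ)⟩

/-- If `x` and `y` have matching leading terms relative to every centre in `G`, then so do the
values at `x`, `y` of every polynomial over `G` all of whose derivative roots lie in `G`:
expanding around the closest such root there is no cancellation. -/
lemma eval_mem (hn : ResCharZero v₁) (hv : IsHenselVal v₁) {G : Subring (K₁ × K₂)}
    (hG : (G : Set (K₁ × K₂)) ⊆ c.M) {z : K₁ × K₂} (hz : ∀ a ∈ G, z - a ∈ c.M)
    (hzG : ∀ a ∈ G, a.1 ≠ z.1) {h : (K₁ × K₂)[X]} (hh : ∀ i, h.coeff i ∈ G)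
    (hroots : ∀ β ∈ derivRoots 0 (h.map (RingHom.fst K₁ K₂)), ∃ b ∈ G, b.1 = β) :
    h.eval z ∈ c.M := by
  by_cases h0 : h.map (RingHom.fst K₁ K₂) = 0
  · have : h = 0 := by
      ext1 i
      have h1 : (h.coeff i).1 = 0 := by
        have := congrArg (fun q => coeff q i) h0
        simpa using! this
      exact Prod.ext h1 ((c.zero_iff (hG (hh i))).1 h1)
    simpa [this] using c.zero_mem
  obtain ⟨a, haG, -, hmin⟩ := exists_closest (v₁ := v₁) z.1 G.zero_mem _ hroots
  have hza : z.1 - a.1 ≠ 0 := sub_ne_zero.2 (hzG a haG).symm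
  obtain ⟨l, hl, hl0, hN, hle, hu⟩ := c.exists_normalization hG haG (hz a haG) hza hh h0
  have hev : (rescale l⁻¹ a (z - a) h).eval 1 = l⁻¹ * h.eval z := by
    rw [rescale_eval]; simp
  have hevN : l⁻¹ * h.eval z ∈ c.N := by
    rw [← hev, ← taylor_coeff_zero]
    exact taylor_coeff_mem c.N hN c.N.one_mem 0
  have hmap : (rescale l⁻¹ a (z - a) h).map (RingHom.fst K₁ K₂) =
      rescale l.1⁻¹ a.1 (z.1 - a.1) (h.map (RingHom.fst K₁ K₂)) := map_rescale _ _ _ _ _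
  have hev1 : (rescale l.1⁻¹ a.1 (z.1 - a.1) (h.map (RingHom.fst K₁ K₂))).eval 1 =
      (l⁻¹ * h.eval z).1 := by
    rw [← hmap, ← hev, eval_map, eval₂_at_one]; rfl
  have key : v₁ (l⁻¹ * h.eval z).1 = 1 := by
    by_contra hne
    have hle1 : v₁ (l⁻¹ * h.eval z).1 ≤ 1 := by
      rw [← hev1, ← taylor_coeff_zero]
      refine val_taylor_le hn (fun i => ?_) (by simp) 0
      rw [← hmap, coeff_map]
      exact hle i
    obtain ⟨j, β, hj, hβ, hlt, -⟩ := exists_closer_root hn hv (l := l.1) hza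
      (fun i => by rw [← hmap, coeff_map]; exact hle i)
      (by obtain ⟨i, hi⟩ := hu; exact ⟨i, by rw [← hmap, coeff_map]; exact hi⟩)
      (by rw [hev1]; exact lt_of_le_of_ne hle1 hne)
    exact absurd (hmin β (mem_derivRoots.2 ⟨j, zero_le, hj, hβ⟩)) (not_le.2 hlt)
  have := c.mul_mem hl (c.M_of_N hevN key)
  rwa [← mul_assoc, c.mul_inv_cancel hl hl0, one_mul] at this

/-- If `x` is a root of `P` and all roots of proper derivatives of `P` lie in `G`, then near `y`
there is a root of `P`, as close as any prescribed element of `G` requires. -/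
lemma exists_root_near (hn : ResCharZero v₁) (hv : IsHenselVal v₁) (hv₂ : IsHenselVal v₂)
    {G : Subring (K₁ × K₂)} (hG : (G : Set (K₁ × K₂)) ⊆ c.M) {z : K₁ × K₂}
    (hz : ∀ a ∈ G, z - a ∈ c.M) (hzG : ∀ a ∈ G, a.1 ≠ z.1) {P : (K₁ × K₂)[X]}
    (hP : ∀ i, P.coeff i ∈ G) (hP0 : P.map (RingHom.fst K₁ K₂) ≠ 0) (hPz : (P.eval z).1 = 0)
    (hroots : ∀ β ∈ derivRoots 1 (P.map (RingHom.fst K₁ K₂)), ∃ b ∈ G, b.1 = β)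
    {a₀ : K₁ × K₂} (ha₀ : a₀ ∈ G) :
    ∃ y, (P.map (RingHom.snd K₁ K₂)).eval y = 0 ∧ v₂ (y - z.2) < v₂ (z.2 - a₀.2) := by
  obtain ⟨a, haG, ha0, hmin⟩ := exists_closest (v₁ := v₁) z.1 ha₀ _ hroots
  have hza : z.1 - a.1 ≠ 0 := sub_ne_zero.2 (hzG a haG).symm
  have hza0 : z.1 - a₀.1 ≠ 0 := sub_ne_zero.2 (hzG a₀ ha₀).symm
  obtain ⟨l, hl, hl0, hN, hle, hu⟩ := c.exists_normalization hG haG (hz a haG) hza hP hP0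
  have hev : (rescale l⁻¹ a (z - a) P).eval 1 = l⁻¹ * P.eval z := by
    rw [rescale_eval]; simp
  have hmap : (rescale l⁻¹ a (z - a) P).map (RingHom.fst K₁ K₂) =
      rescale l.1⁻¹ a.1 (z.1 - a.1) (P.map (RingHom.fst K₁ K₂)) := map_rescale _ _ _ _ _
  have hmap2 : (rescale l⁻¹ a (z - a) P).map (RingHom.snd K₁ K₂) =
      rescale l.2⁻¹ a.2 (z.2 - a.2) (P.map (RingHom.snd K₁ K₂)) := map_rescale _ _ _ _ _
  have hTN := taylor_coeff_mem c.N hN c.N.one_mem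
  have hT1 : ∀ i, (taylor 1 (rescale l.1⁻¹ a.1 (z.1 - a.1)
      (P.map (RingHom.fst K₁ K₂)))).coeff i = ((taylor 1 (rescale l⁻¹ a (z - a) P)).coeff i).1 := by
    intro i
    rw [← hmap]
    have := map_taylor (rescale l⁻¹ a (z - a) P) 1 (RingHom.fst K₁ K₂)
    rw [map_one] at this
    rw [← this, coeff_map]; rfl
  have hT2 : ∀ i, (taylor 1 (rescale l.2⁻¹ a.2 (z.2 - a.2)
      (P.map (RingHom.snd K₁ K₂)))).coeff i = ((taylor 1 (rescale l⁻¹ a (z - a) P)).coeff i).2 := by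
    intro i
    rw [← hmap2]
    have := map_taylor (rescale l⁻¹ a (z - a) P) 1 (RingHom.snd K₁ K₂)
    rw [map_one] at this
    rw [← this, coeff_map]; rfl
  have hT0 : ((taylor 1 (rescale l⁻¹ a (z - a) P)).coeff 0).1 = 0 := by
    rw [taylor_coeff_zero, hev, Prod.fst_mul, hPz, mul_zero]
  obtain ⟨j, β, hj, hβ, hlt, hj1⟩ := exists_closer_root hn hv (l := l.1) hza
    (fun i => by rw [← hmap, coeff_map]; exact hle i)
    (by obtain ⟨i, hi⟩ := hu; exact ⟨i, by rw [← hmap, coeff_map]; exact hi⟩)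
    (by rw [← taylor_coeff_zero, hT1, hT0]; simp)
  obtain rfl : j = 0 := by
    by_contra hj0
    exact absurd (hmin β (mem_derivRoots.2 ⟨j, by omega, hj, hβ⟩)) (not_le.2 hlt)
  rw [hT1] at hj1
  obtain ⟨w, hw, hw0⟩ := hv₂ (taylor 1 (rescale l.2⁻¹ a.2 (z.2 - a.2)
      (P.map (RingHom.snd K₁ K₂))))
    (fun i => by rw [hT2]; exact c.N_le (hTN i))
    (by rw [hT2]; exact c.N_lt (hTN 0) (by rw [hT0]; simp))
    (by rw [hT2]; exact c.val_eq_one (c.M_of_N (hTN 1) hj1) hj1)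
  have hl2 := c.ne_zero hl hl0
  have hza2 : z.2 - a.2 ≠ 0 := c.ne_zero (hz a haG) hza
  rw [taylor_eval, rescale_eval] at hw0
  refine ⟨_, (mul_eq_zero.1 hw0).resolve_left (inv_ne_zero hl2), ?_⟩
  have e : a.2 + (z.2 - a.2) * (w + 1) - z.2 = (z.2 - a.2) * w := by ring
  rw [e, map_mul]
  refine lt_of_lt_of_le
    (mul_lt_of_lt_one_right (zero_lt_iff.2 ((v₂.ne_zero_iff).2 hza2)) hw) ?_
  exact (c.val_le_iff (hz a haG) (hz a₀ ha₀) hza0).1 ha0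

end Corr
end Corr

/-! ### Extending a partial isomorphism -/

section Corr
variable {K₁ K₂ Γ₁ Γ₂ : Type*} [Field K₁] [Field K₂]
  [LinearOrderedCommGroupWithZero Γ₁] [LinearOrderedCommGroupWithZero Γ₂]
variable {v₁ : Valuation K₁ Γ₁} {v₂ : Valuation K₂ Γ₂} (c : Corr v₁ v₂)

namespace Corr

/-- In the situation of `exists_root_near`, one root of `P` serves all elements of `G` at once,
because `P` has only finitely many roots. -/
lemma exists_root_match (hn : ResCharZero v₁) (hv : IsHenselVal v₁) (hv₂ : IsHenselVal v₂)
    {G : Subring (K₁ × K₂)} (hG : (G : Set (K₁ × K₂)) ⊆ c.M) {z : K₁ × K₂}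
    (hz : ∀ a ∈ G, z - a ∈ c.M) (hzG : ∀ a ∈ G, a.1 ≠ z.1) {P : (K₁ × K₂)[X]}
    (hP : ∀ i, P.coeff i ∈ G) (hP0 : P.map (RingHom.fst K₁ K₂) ≠ 0) (hPz : (P.eval z).1 = 0)
    (hroots : ∀ β ∈ derivRoots 1 (P.map (RingHom.fst K₁ K₂)), ∃ b ∈ G, b.1 = β) :
    ∃ y, (P.map (RingHom.snd K₁ K₂)).eval y = 0 ∧ ∀ a ∈ G, ((z.1, y) : K₁ × K₂) - a ∈ c.M := by
  have hP2 : P.map (RingHom.snd K₁ K₂) ≠ 0 := by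
    intro h
    apply hP0
    ext i
    have h1 : (P.coeff i).2 = 0 := by
      have := congrArg (fun q => coeff q i) h
      simpa using! this
    simpa using! (c.zero_iff (hG (hP i))).2 h1
  have near := fun a₀ (ha₀ : a₀ ∈ G) =>
    c.exists_root_near hn hv hv₂ hG hz hzG hP hP0 hPz hroots ha₀
  obtain ⟨y, hy, hya⟩ : ∃ y, (P.map (RingHom.snd K₁ K₂)).eval y = 0 ∧
      ∀ a ∈ G, v₂ (y - z.2) < v₂ (z.2 - a.2) := by
    by_contra! hcon
    choose! A hAG hA using hcon
    classical
    obtain ⟨a, haG, hamin⟩ : ∃ a ∈ G, ∀ y ∈ (P.map (RingHom.snd K₁ K₂)).roots.toFinset,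
        v₂ (z.2 - a.2) ≤ v₂ (z.2 - (A y).2) := by
      rcases ((P.map (RingHom.snd K₁ K₂)).roots.toFinset).eq_empty_or_nonempty with he | hne
      · exact ⟨0, G.zero_mem, by simp [he]⟩
      · obtain ⟨y, hy, hmin⟩ := Finset.exists_min_image _ (fun y => v₂ (z.2 - (A y).2)) hne
        exact ⟨A y, hAG y (mem_roots'.1 (Multiset.mem_toFinset.1 hy)).2, hmin⟩
    obtain ⟨y, hy, hlt⟩ := near a haG
    have := hamin y (Multiset.mem_toFinset.2 (mem_roots'.2 ⟨hP2, hy⟩))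
    exact absurd (hlt.trans_le this) (not_lt.2 (hA y hy))
  refine ⟨y, hy, fun a ha => ?_⟩
  convert! c.perturb (hz a ha) (b := y - z.2) (by simpa using hya a ha) using 1
  exact Prod.ext (by simp) (by simp)

/-- Saturation of `M`: countably many conditions on the leading terms of `y - b` can be
satisfied together as soon as any finitely many of them can. -/
def Saturated : Prop :=
  ∀ (x : K₁) (s : Set (K₁ × K₂)), s.Countable → (∀ a ∈ s, a.1 ≠ x) →
    (∀ F : Finset (K₁ × K₂), ↑F ⊆ s → ∃ y, ∀ a ∈ F, ((x, y) : K₁ × K₂) - a ∈ c.M) →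
    ∃ y, ∀ a ∈ s, ((x, y) : K₁ × K₂) - a ∈ c.M

/-- By saturation only finitely many centres matter; a match of leading terms relative to the
centre closest to `x` is a match relative to the other ones too, since the sum
`(x - a) + (a - b)` has no cancellation. -/
lemma exists_match {G : Subring (K₁ × K₂)} (hG : (G : Set (K₁ × K₂)) ⊆ c.M)
    (hcount : (G : Set (K₁ × K₂)).Countable) (hsat : c.Saturated) {x : K₁}
    (hx : ∀ a ∈ G, a.1 ≠ x) (hlift : ∀ a ∈ G, ∃ y, ((x - a.1, y) : K₁ × K₂) ∈ c.M) :
    ∃ y, ∀ a ∈ G, ((x, y) : K₁ × K₂) - a ∈ c.M := by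
  refine hsat x G hcount hx fun F hF => ?_
  rcases F.eq_empty_or_nonempty with rfl | hne
  · exact ⟨0, by simp⟩
  obtain ⟨a, haF, hmin⟩ := Finset.exists_min_image F (fun a => v₁ (x - a.1)) hne
  obtain ⟨y, hy⟩ := hlift a (hF haF)
  refine ⟨y + a.2, fun b hb => ?_⟩
  have e : ((x, y + a.2) : K₁ × K₂) - b = (x - a.1, y) + (a - b) :=
    Prod.ext (by simp) (by simp [add_sub_assoc])
  have e1 : ((x - a.1, y) + (a - b) : K₁ × K₂).1 = x - b.1 := by simp
  rw [e]
  refine c.add_mem hy (hG (G.sub_mem (hF haF) (hF hb))) ?_ ?_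
  · rw [e1]; exact hmin b hb
  · rw [e1]
    have : (a - b).1 = (x - b.1) - (x - a.1) := by simp
    rw [this]
    exact (v₁.map_sub _ _).trans (max_le le_rfl (hmin b hb))

/-- The subring of quotients of a subring of `K₁ × K₂` contained in `M`. -/
def fracSubring {G : Subring (K₁ × K₂)} (hG : (G : Set (K₁ × K₂)) ⊆ c.M) : Subring (K₁ × K₂) where
  carrier := {r | ∃ a ∈ G, ∃ b ∈ G, b.1 ≠ 0 ∧ r = a * b⁻¹}
  mul_mem' := by
    rintro _ _ ⟨a, ha, b, hb, hb0, rfl⟩ ⟨a', ha', b', hb', hb0', rfl⟩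
    refine ⟨a * a', G.mul_mem ha ha', b * b', G.mul_mem hb hb', mul_ne_zero hb0 hb0', ?_⟩
    rw [mul_inv, mul_mul_mul_comm]
  one_mem' := ⟨1, G.one_mem, 1, G.one_mem, by simp, by simp⟩
  add_mem' := by
    rintro _ _ ⟨a, ha, b, hb, hb0, rfl⟩ ⟨a', ha', b', hb', hb0', rfl⟩
    refine ⟨a * b' + a' * b, G.add_mem (G.mul_mem ha hb') (G.mul_mem ha' hb), b * b',
      G.mul_mem hb hb', mul_ne_zero hb0 hb0', ?_⟩
    have h2 := c.ne_zero (hG hb) hb0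
    have h2' := c.ne_zero (hG hb') hb0'
    refine Prod.ext ?_ ?_
    · simp only [Prod.fst_add, Prod.fst_mul, Prod.fst_inv]
      field_simp
    · simp only [Prod.snd_add, Prod.snd_mul, Prod.snd_inv]
      field_simp
  zero_mem' := ⟨0, G.zero_mem, 1, G.one_mem, by simp, by simp⟩
  neg_mem' := by
    rintro _ ⟨a, ha, b, hb, hb0, rfl⟩
    exact ⟨-a, G.neg_mem ha, b, hb, hb0, by rw [neg_mul]⟩

/-- Extension theorem: a partial isomorphism (a subring `G₀` of `K₁ × K₂`) with matching leading
terms extends to every countable relatively algebraically closed subfield `B` of `K₁` all of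
whose leading terms have a match. -/
theorem exists_extension (hn : ResCharZero v₁) (hv : IsHenselVal v₁) (hv₂ : IsHenselVal v₂)
    (hsat : c.Saturated) (B : Subfield K₁) (hB : (B : Set K₁).Countable)
    (hBalg : ∀ (q : K₁[X]) (x : K₁), q ≠ 0 → (∀ i, q.coeff i ∈ B) → q.eval x = 0 → x ∈ B)
    (hlift : ∀ x ∈ B, ∃ y, ((x, y) : K₁ × K₂) ∈ c.M) (G₀ : Subring (K₁ × K₂))
    (hG₀ : (G₀ : Set (K₁ × K₂)) ⊆ c.M) (hG₀B : ∀ a ∈ G₀, a.1 ∈ B) :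
    ∃ G : Subring (K₁ × K₂), G₀ ≤ G ∧ (G : Set (K₁ × K₂)) ⊆ c.M ∧ (∀ a ∈ G, a.1 ∈ B) ∧
      ∀ x ∈ B, ∃ y, (x, y) ∈ G := by
  obtain ⟨G, hG₀G, hmax⟩ := zorn_le_nonempty₀
    {G : Subring (K₁ × K₂) | (G : Set (K₁ × K₂)) ⊆ c.M ∧ ∀ a ∈ G, a.1 ∈ B} (by
      intro C hC hchain G hGC
      have hdir : DirectedOn (· ≤ ·) C := hchain.directedOn
      refine ⟨sSup C, ⟨fun a ha => ?_, fun a ha => ?_⟩, fun H hH => le_sSup hH⟩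
      · obtain ⟨H, hH, haH⟩ := (Subring.mem_sSup_of_directedOn ⟨G, hGC⟩ hdir).1 ha
        exact (hC hH).1 haH
      · obtain ⟨H, hH, haH⟩ := (Subring.mem_sSup_of_directedOn ⟨G, hGC⟩ hdir).1 ha
        exact (hC hH).2 a haH) G₀ ⟨hG₀, hG₀B⟩
  obtain ⟨hGM, hGB⟩ := hmax.prop
  have hmax' : ∀ H : Subring (K₁ × K₂), (H : Set (K₁ × K₂)) ⊆ c.M → (∀ a ∈ H, a.1 ∈ B) → G ≤ H →
      H ≤ G := fun H h1 h2 h3 => hmax.le_of_ge ⟨h1, h2⟩ h3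
  have hinv : ∀ a ∈ G, a⁻¹ ∈ G := by
    intro a ha
    by_cases h0 : a.1 = 0
    · have : a = 0 := Prod.ext h0 ((c.zero_iff (hGM ha)).1 h0)
      rw [this, show (0 : K₁ × K₂)⁻¹ = 0 from Prod.ext (by simp) (by simp)]
      exact G.zero_mem
    · refine hmax' (c.fracSubring hGM) ?_ ?_ ?_ ⟨1, G.one_mem, a, ha, h0, by simp⟩
      · rintro _ ⟨a, ha, b, hb, hb0, rfl⟩
        exact c.mul_mem (hGM ha) (c.inv_mem (hGM hb))
      · rintro _ ⟨a, ha, b, hb, hb0, rfl⟩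
        exact B.mul_mem (hGB a ha) (B.inv_mem (hGB b hb))
      · exact fun a ha => ⟨a, ha, 1, G.one_mem, by simp, by simp⟩
  have hinj : ∀ a ∈ G, ∀ b ∈ G, a.1 = b.1 → a = b := by
    intro a ha b hb hab
    refine Prod.ext hab ?_
    have := (c.zero_iff (hGM (G.sub_mem ha hb))).1 (by simp [hab])
    exact sub_eq_zero.1 this
  have hcount : (G : Set (K₁ × K₂)).Countable := by
    refine Set.MapsTo.countable_of_injOn (f := Prod.fst) (t := (B : Set K₁)) hGB ?_ hB
    exact fun a ha b hb hab => hinj a ha b hb hab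
  have hmatch : ∀ x ∈ B, (∀ a ∈ G, a.1 ≠ x) → ∃ y, ∀ a ∈ G, ((x, y) : K₁ × K₂) - a ∈ c.M :=
    fun x hx hxG => c.exists_match hGM hcount hsat hxG
      fun a ha => hlift _ (B.sub_mem hx (hGB a ha))
  -- Maximality excludes a proper extension generated by a single pair `z`.
  have hext : ∀ z : K₁ × K₂, z.1 ∈ B → (∀ h : G[X], (h.map G.subtype).eval z ∈ c.M) → z ∈ G := by
    intro z hzB hz
    refine hmax' (eval₂RingHom G.subtype z).range ?_ ?_ ?_ ⟨X, by simp⟩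
    · rintro _ ⟨h, rfl⟩
      simpa [eval_map] using hz h
    · rintro _ ⟨h, rfl⟩
      have : (eval₂RingHom G.subtype z h).1 =
          ∑ i ∈ Finset.range (h.natDegree + 1), (h.coeff i).1.1 * z.1 ^ i := by
        rw [coe_eval₂RingHom, eval₂_eq_sum_range, Prod.fst_sum]
        simp
      rw [this]
      exact B.sum_mem fun i _ => B.mul_mem (hGB _ (h.coeff i).2) (B.pow_mem hzB i)
    · exact fun a ha => ⟨C ⟨a, ha⟩, by simp⟩
  refine ⟨G, hG₀G, hGM, hGB, ?_⟩
  by_contra! hcon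
  obtain ⟨x₀, hx₀B, hx₀⟩ := hcon
  have hx₀G : ∀ a ∈ G, a.1 ≠ x₀ := fun a ha h => hx₀ a.2 (by rw [← h]; exact ha)
  -- `bad d`: some polynomial of degree `d` over `G` has a root outside `G`.
  set bad : ℕ → Prop := fun d => ∃ h : G[X], h.natDegree = d ∧ h ≠ 0 ∧
    ∃ x, ((h.map G.subtype).map (RingHom.fst K₁ K₂)).eval x = 0 ∧ ∀ a ∈ G, a.1 ≠ x with hbad
  have hphi : Function.Injective ((RingHom.fst K₁ K₂).comp G.subtype) := by
    intro a b hab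
    exact Subtype.ext (hinj a a.2 b b.2 hab)
  have hderiv : ∀ (h : G[X]) (m : ℕ), (∀ d, bad d → h.natDegree < d + m) →
      ∀ β ∈ derivRoots m ((h.map G.subtype).map (RingHom.fst K₁ K₂)), ∃ b ∈ G, b.1 = β := by
    intro h m hd β hβ
    obtain ⟨j, hmj, hj0, hjβ⟩ := mem_derivRoots.1 hβ
    have hm : hasseDeriv j ((h.map G.subtype).map (RingHom.fst K₁ K₂)) =
        ((hasseDeriv j h).map G.subtype).map (RingHom.fst K₁ K₂) := by
      ext i
      simp [hasseDeriv_coeff, coeff_map]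
    rw [hm] at hj0 hjβ
    by_contra! hcon
    have hb : bad (hasseDeriv j h).natDegree :=
      ⟨_, rfl, fun h0 => hj0 (by simp [h0]), β, hjβ, hcon⟩
    have h1 := hd _ hb
    have h2 := natDegree_hasseDeriv_le h j
    have h3 : j ≤ h.natDegree := by
      by_contra h3
      apply hj0
      rw [hasseDeriv_eq_zero_of_lt_natDegree _ _ (not_le.1 h3)]
      simp
    omega
  by_cases hex : ∃ d, bad d
  · -- Adjoin a root of a polynomial of least degree.
    classical
    obtain ⟨hd, hmin⟩ := And.intro (Nat.find_spec hex) (fun m => Nat.find_min' hex (m := m))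
    generalize Nat.find hex = d at hd hmin
    obtain ⟨h, hhd, hh0, x, hx, hxG⟩ := hd
    have hl : ((h.leadingCoeff : G) : K₁ × K₂).1 ≠ 0 := by
      intro h0
      apply leadingCoeff_ne_zero.2 hh0
      apply hphi
      simpa using h0
    set u : G := ⟨(h.leadingCoeff : K₁ × K₂)⁻¹, hinv _ h.leadingCoeff.2⟩ with hu
    have hul : h.leadingCoeff * u = 1 := Subtype.ext (c.mul_inv_cancel (hGM h.leadingCoeff.2) hl)
    set P : G[X] := h * C u with hPdef
    have hPmonic : P.Monic := monic_mul_C_of_leadingCoeff_mul_eq_one hul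
    have : Nontrivial G := ⟨⟨0, 1, fun h01 => by
      have := congrArg (fun t : G => (t : K₁ × K₂).1) h01
      simp at this⟩⟩
    have hPd : P.natDegree = d := by
      rw [hPdef, ← hhd]
      apply natDegree_mul_C_eq_of_mul_ne_zero
      rw [hul]
      exact one_ne_zero
    have hPx : ((P.map G.subtype).map (RingHom.fst K₁ K₂)).eval x = 0 := by
      simp [hPdef, hx]
    have hP0 : (P.map G.subtype).map (RingHom.fst K₁ K₂) ≠ 0 :=
      ((hPmonic.map _).map _).ne_zero
    have hxB : x ∈ B := by
      refine hBalg _ x hP0 (fun i => ?_) hPx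
      rw [coeff_map, coeff_map]
      exact hGB _ (P.coeff i).2
    obtain ⟨y₀, hy₀⟩ := hmatch x hxB hxG
    have hPz : ∀ y, ((P.map G.subtype).eval ((x, y) : K₁ × K₂)).1 = 0 := by
      intro y
      rw [← hPx, eval_map (RingHom.fst K₁ K₂)]
      exact (eval₂_at_apply (RingHom.fst K₁ K₂) ((x, y) : K₁ × K₂)).symm
    obtain ⟨y, hy, hyG⟩ := c.exists_root_match hn hv hv₂ hGM hy₀ hxG
      (fun i => by rw [coeff_map]; exact (P.coeff i).2) hP0 (hPz y₀)
      (hderiv P 1 fun d' hd' => by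
        have := hmin _ hd'
        omega)
    have hPz0 : (P.map G.subtype).eval ((x, y) : K₁ × K₂) = 0 := by
      refine Prod.ext (hPz y) ?_
      change _ = (0 : K₂)
      rw [← hy, eval_map (RingHom.snd K₁ K₂)]
      exact (eval₂_at_apply (RingHom.snd K₁ K₂) ((x, y) : K₁ × K₂)).symm
    refine hxG _ (hext (x, y) hxB fun h => ?_) rfl
    rw [← modByMonic_add_div h P, Polynomial.map_add, Polynomial.map_mul, eval_add, eval_mul,
      hPz0, zero_mul, add_zero]
    refine c.eval_mem hn hv hGM hyG hxG (fun i => by rw [coeff_map]; exact Subtype.prop _)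
      (hderiv _ 0 fun d' hd' => ?_)
    have h1 := hmin _ hd'
    have h2 : (h %ₘ P).natDegree < P.natDegree := natDegree_modByMonic_lt _ hPmonic (by
      intro h1
      rw [h1] at hPx
      simp at hPx)
    omega
  · -- All polynomials over `G` have their roots in `G`.
    push Not at hex
    obtain ⟨y, hy⟩ := hmatch x₀ hx₀B hx₀G
    refine hx₀ y (hext (x₀, y) hx₀B fun h => ?_)
    exact c.eval_mem hn hv hGM hy hx₀G (fun i => by rw [coeff_map]; exact Subtype.prop _)
      (hderiv _ 0 fun d' hd' => absurd hd' (hex d'))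

end Corr
end Corr

/-! ### Ultrapowers and Witt vectors over rings of sequences -/

noncomputable section Ultra
open Filter

/-- The ultrapower of `X` along a fixed nonprincipal ultrafilter on `ℕ`. -/
abbrev Ultra (X : Type*) := Germ ((hyperfilter ℕ : Ultrafilter ℕ) : Filter ℕ) X

/-- The class of a sequence in the ultrapower. -/
def seqGerm (k : Type*) [CommRing k] : (ℕ → k) →+* Ultra k := Germ.coeRingHom _

/-- The diagonal embedding into the ultrapower. -/
def diag (k : Type*) [CommRing k] : k →+* Ultra k := (seqGerm k).comp (Pi.constRingHom ℕ k)

lemma seqGerm_eq {k : Type*} [CommRing k] {f g : ℕ → k} :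
    seqGerm k f = seqGerm k g ↔ ∀ᶠ n in (hyperfilter ℕ : Filter ℕ), f n = g n := Germ.coe_eq

lemma seqGerm_surjective (k : Type*) [CommRing k] : Function.Surjective (seqGerm k) :=
  fun x => Germ.inductionOn x fun f => ⟨f, rfl⟩

lemma seqGerm_eq_zero {k : Type*} [CommRing k] {f : ℕ → k} :
    seqGerm k f = 0 ↔ ∀ᶠ n in (hyperfilter ℕ : Filter ℕ), f n = 0 := by
  rw [← map_zero (seqGerm k)]; exact seqGerm_eq

/-- Countable saturation of ultrapowers: countably many internal conditions that are finitely
satisfiable on almost every coordinate have a common solution. -/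
lemma exists_seq_of_finite {ι X : Type*} [Countable ι] (P : ι → ℕ → X → Prop)
    (h : ∀ F : Finset ι, ∀ᶠ n in (hyperfilter ℕ : Filter ℕ), ∃ x, ∀ i ∈ F, P i n x) :
    ∃ x : ℕ → X, ∀ i, ∀ᶠ n in (hyperfilter ℕ : Filter ℕ), P i n (x n) := by
  classical
  obtain ⟨e, he⟩ := exists_injective_nat ι
  -- `F m` is the finite set of the conditions with index below `m`.
  have hfin : ∀ m : ℕ, {i | e i < m}.Finite := fun m =>
    (Set.finite_Iio m).preimage he.injOn
  set F : ℕ → Finset ι := fun m => (hfin m).toFinset with hF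
  have hne : ∃ x : X, True := by
    obtain ⟨n, x, -⟩ := (h ∅).exists
    exact ⟨x, trivial⟩
  obtain ⟨x₀, -⟩ := hne
  set good : ℕ → ℕ → Prop := fun n m => ∃ x, ∀ i ∈ F m, P i n x with hgood
  set x : ℕ → X := fun n => if h : ∃ m ≤ n, good n m then
    (Nat.findGreatest_spec (P := good n) h.choose_spec.1 h.choose_spec.2).choose else x₀ with hx
  refine ⟨x, fun i => ?_⟩
  have h1 := h (F (e i + 1))
  have h2 : ∀ᶠ n in (hyperfilter ℕ : Filter ℕ), e i + 1 ≤ n := by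
    refine Nat.hyperfilter_le_atTop (eventually_ge_atTop _)
  filter_upwards [h1, h2] with n hn1 hn2
  have hh : ∃ m ≤ n, good n m := ⟨_, hn2, hn1⟩
  simp only [hx, dif_pos hh]
  have hs := (Nat.findGreatest_spec (P := good n) hh.choose_spec.1 hh.choose_spec.2).choose_spec
  refine hs i ?_
  have := Nat.le_findGreatest (P := good n) hn2 hn1
  simp only [hF, Set.Finite.mem_toFinset, Set.mem_ofPred_eq]
  omega

end Ultra

noncomputable section WittSeq
open Filter

variable (p : ℕ) [Fact p.Prime] (κ : Type*) [Field κ] [CharP κ p] [PerfectRing κ p]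

instance ultraCharP : CharP (Ultra κ) p := charP_of_injective_ringHom (diag κ).injective p

instance seqPerfect : PerfectRing (ℕ → κ) p := by
  refine ⟨⟨fun f g h => ?_, fun f => ?_⟩⟩
  · funext n
    exact (PerfectRing.bijective_frobenius (R := κ) (p := p)).injective (congrFun h n)
  · choose g hg using fun n => (PerfectRing.bijective_frobenius (R := κ) (p := p)).surjective (f n)
    exact ⟨g, funext hg⟩

/-- The ultrapower of the fraction field of `W(κ)`. -/
abbrev WUltra := Ultra (FractionRing (WittVector p κ))

/-- A Witt vector over the ring of sequences in `κ`, viewed as a sequence of Witt vectors, has a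
class in the ultrapower of the fraction field of `W(κ)`. -/
def wittGerm : WittVector p (ℕ → κ) →+* WUltra p κ :=
  (seqGerm _).comp (RingHom.pi fun n =>
    (algebraMap (WittVector p κ) (FractionRing (WittVector p κ))).comp
      (WittVector.map (Pi.evalRingHom (fun _ => κ) n)))

/-- The coordinatewise reduction of a sequence of Witt vectors over `κ` to a Witt vector over the
ultrapower of `κ`. -/
def wittRed : WittVector p (ℕ → κ) →+* WittVector p (Ultra κ) := WittVector.map (seqGerm κ)

/-- The `n`-th term of a Witt vector over a ring of sequences. -/
abbrev wittAt (n : ℕ) : WittVector p (ℕ → κ) →+* WittVector p κ :=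
  WittVector.map (Pi.evalRingHom (fun _ => κ) n)

/-- The class of the sequence of the powers `p ^ γ n`. -/
def pPow (γ : ℕ → ℤ) : WUltra p κ := seqGerm _ fun n => (p : FractionRing (WittVector p κ)) ^ γ n

variable {p κ}

lemma wittRed_coeff (u : WittVector p (ℕ → κ)) (i : ℕ) :
    (wittRed p κ u).coeff i = seqGerm κ (u.coeff i) := rfl

lemma wittGerm_apply (u : WittVector p (ℕ → κ)) :
    wittGerm p κ u = seqGerm _ fun n => algebraMap _ _ (wittAt p κ n u) := rfl

lemma wittGerm_eq {u w : WittVector p (ℕ → κ)} : wittGerm p κ u = wittGerm p κ w ↔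
    ∀ᶠ n in (hyperfilter ℕ : Filter ℕ), wittAt p κ n u = wittAt p κ n w := by
  rw [wittGerm_apply, wittGerm_apply, seqGerm_eq]
  simp only [(IsFractionRing.injective (WittVector p κ) (FractionRing (WittVector p κ))).eq_iff]

lemma wittRed_eq_of_wittGerm_eq {u w : WittVector p (ℕ → κ)}
    (h : wittGerm p κ u = wittGerm p κ w) : wittRed p κ u = wittRed p κ w := by
  ext i
  rw [wittRed_coeff, wittRed_coeff, seqGerm_eq]
  filter_upwards [wittGerm_eq.1 h] with n hn
  exact congrArg (fun t => WittVector.coeff t i) hn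

/-- Every sequence of Witt vectors comes from a Witt vector over the ring of sequences. -/
lemma exists_wittAt (f : ℕ → WittVector p κ) : ∃ u, ∀ n, wittAt p κ n u = f n :=
  ⟨WittVector.mk p fun i n => (f n).coeff i, fun n => by
    ext i
    simp [wittAt, WittVector.map_coeff]⟩

lemma exists_wittGerm {f : ℕ → FractionRing (WittVector p κ)}
    (h : ∀ᶠ n in (hyperfilter ℕ : Filter ℕ), ∃ t : WittVector p κ, algebraMap _ _ t = f n) :
    ∃ u, wittGerm p κ u = seqGerm _ f := by
  classical
  obtain ⟨u, hu⟩ := exists_wittAt fun n =>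
    if h : ∃ t : WittVector p κ, algebraMap _ _ t = f n then h.choose else 0
  refine ⟨u, ?_⟩
  rw [wittGerm_apply, seqGerm_eq]
  filter_upwards [h] with n hn
  rw [hu n, dif_pos hn]
  exact hn.choose_spec

/-- A sequence of Witt vectors whose reduction is divisible by `p ^ m` is itself divisible by
`p ^ m` almost everywhere. -/
lemma exists_div {u : WittVector p (ℕ → κ)} {m : ℕ} {x : WittVector p (Ultra κ)}
    (h : wittRed p κ u = x * (p : WittVector p (Ultra κ)) ^ m) :
    ∃ t, wittGerm p κ u = wittGerm p κ t * (p : WUltra p κ) ^ m ∧ wittRed p κ t = x := by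
  classical
  have h0 : ∀ i, i < m → ∀ᶠ n in (hyperfilter ℕ : Filter ℕ), u.coeff i n = 0 := by
    intro i hi
    rw [← seqGerm_eq_zero, ← wittRed_coeff, h, WittVector.mul_pow_charP_coeff_zero _ hi]
  set u' : WittVector p (ℕ → κ) := WittVector.mk p fun i => if i < m then 0 else u.coeff i with hu'
  have huu : wittGerm p κ u = wittGerm p κ u' := by
    rw [wittGerm_eq]
    have : ∀ᶠ n in (hyperfilter ℕ : Filter ℕ), ∀ i ∈ Finset.range m, u.coeff i n = 0 :=
      (eventually_all_finset _).2 fun i hi => h0 i (Finset.mem_range.1 hi)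
    filter_upwards [this] with n hn
    ext i
    by_cases hi : i < m
    · simpa [hu', hi, WittVector.map_coeff] using hn i (Finset.mem_range.2 hi)
    · simp [hu', hi, WittVector.map_coeff]
  obtain ⟨t, ht⟩ : ∃ t, u' = (p : WittVector p (ℕ → κ)) ^ m * t := by
    have := (WittVector.mem_span_p_pow_iff_le_coeff_eq_zero u' m).2 fun i hi => by simp [hu', hi]
    exact Ideal.mem_span_singleton.1 this
  refine ⟨t, ?_, ?_⟩
  · rw [huu, ht, map_mul, map_pow, map_natCast, mul_comm]
  · have h1 : wittRed p κ t * (p : WittVector p (Ultra κ)) ^ m = x * p ^ m := by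
      rw [← h, wittRed_eq_of_wittGerm_eq huu, ht, map_mul, map_pow, map_natCast, mul_comm]
    exact mul_right_cancel₀ (pow_ne_zero _ (WittVector.p_nonzero p _)) h1

lemma p_ne_zero : (p : WUltra p κ) ≠ 0 := by
  have := (diag (FractionRing (WittVector p κ))).injective.ne
    (WittVector.FractionRing.p_nonzero p κ)
  simpa using this

lemma wittRed_eq_zero_iff {u : WittVector p (ℕ → κ)} :
    wittRed p κ u = 0 ↔ ∀ m : ℕ, ∃ t, wittGerm p κ u = wittGerm p κ t * (p : WUltra p κ) ^ m := by
  constructor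
  · intro h m
    obtain ⟨t, ht, -⟩ := exists_div (u := u) (m := m) (x := 0) (by rw [h, zero_mul])
    exact ⟨t, ht⟩
  · intro h
    ext i
    obtain ⟨t, ht⟩ := h (i + 1)
    have : wittGerm p κ u = wittGerm p κ (t * (p : WittVector p (ℕ → κ)) ^ (i + 1)) := by simp [ht]
    rw [wittRed_eq_of_wittGerm_eq this, map_mul, map_pow, map_natCast,
      WittVector.mul_pow_charP_coeff_zero _ (Nat.lt_succ_self i), WittVector.zero_coeff]

lemma not_p_mul (u : WittVector p (ℕ → κ)) : wittGerm p κ u * (p : WUltra p κ) ≠ 1 := by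
  intro h
  have h1 : wittGerm p κ (u * p) = wittGerm p κ 1 := by simp [h]
  have h2 := congrArg (fun t => WittVector.coeff t 0) (wittRed_eq_of_wittGerm_eq h1)
  simp only [map_mul, map_natCast, WittVector.mul_charP_coeff_zero, map_one,
    WittVector.one_coeff_zero] at h2
  exact zero_ne_one h2

/-- A nonzero element of the fraction field of `W(κ)` is a unit times a power of `p`. -/
lemma exists_zpow_mul {x : FractionRing (WittVector p κ)} (hx : x ≠ 0) :
    ∃ (γ : ℤ) (t : WittVector p κ), t.coeff 0 ≠ 0 ∧
      x = (p : FractionRing (WittVector p κ)) ^ γ * algebraMap _ _ t := by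
  have hp := WittVector.FractionRing.p_nonzero p κ
  obtain ⟨a, b, hb, rfl⟩ := IsFractionRing.div_surjective (A := WittVector p κ) x
  have hb0 : b ≠ 0 := nonZeroDivisors.ne_zero hb
  have ha0 : a ≠ 0 := by
    rintro rfl
    simp at hx
  obtain ⟨m, u, rfl⟩ := WittVector.exists_eq_pow_p_mul' a ha0
  obtain ⟨n, w, rfl⟩ := WittVector.exists_eq_pow_p_mul' b hb0
  refine ⟨(m : ℤ) - n, (u * w⁻¹ : (WittVector p κ)ˣ), ?_, ?_⟩
  · intro h
    have := (u * w⁻¹).isUnit.map (WittVector.constantCoeff (p := p) (R := κ))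
    exact this.ne_zero h
  · have hw : algebraMap (WittVector p κ) (FractionRing (WittVector p κ)) w ≠ 0 :=
      (w.isUnit.map _).ne_zero
    have hw' : algebraMap (WittVector p κ) (FractionRing (WittVector p κ)) (w⁻¹ : (WittVector p κ)ˣ)
        * algebraMap (WittVector p κ) (FractionRing (WittVector p κ)) w = 1 := by
      rw [← map_mul]; simp
    rw [zpow_sub₀ hp, zpow_natCast, zpow_natCast, Units.val_mul]
    simp only [map_mul, map_pow, map_natCast]
    rw [eq_inv_of_mul_eq_one_left hw']
    field_simp

lemma pPow_add (γ δ : ℕ → ℤ) : pPow p κ (γ + δ) = pPow p κ γ * pPow p κ δ := by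
  rw [pPow, pPow, pPow, ← map_mul]
  congr 1
  funext n
  exact zpow_add₀ (WittVector.FractionRing.p_nonzero p κ) _ _

lemma pPow_zero : pPow p κ 0 = 1 := by
  rw [← map_one (seqGerm _), pPow]
  congr 1

lemma pPow_ne_zero (γ : ℕ → ℤ) : pPow p κ γ ≠ 0 := by
  intro h
  have := pPow_add (p := p) (κ := κ) γ (-γ)
  rw [add_neg_cancel, pPow_zero, h, zero_mul] at this
  exact one_ne_zero this

lemma pPow_neg (γ : ℕ → ℤ) : pPow p κ (-γ) = (pPow p κ γ)⁻¹ := by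
  apply eq_inv_of_mul_eq_one_left
  rw [← pPow_add, neg_add_cancel, pPow_zero]

lemma pPow_const (m : ℤ) : pPow p κ (fun _ => m) = (p : WUltra p κ) ^ m := by
  have := map_zpow₀ (diag (FractionRing (WittVector p κ))) (p : FractionRing (WittVector p κ)) m
  rw [map_natCast] at this
  rw [← this]
  rfl

lemma pPow_congr {γ δ : ℕ → ℤ} (h : ∀ᶠ n in (hyperfilter ℕ : Filter ℕ), γ n = δ n) :
    pPow p κ γ = pPow p κ δ := by
  rw [pPow, pPow, seqGerm_eq]
  filter_upwards [h] with n hn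
  rw [hn]

/-- A nonzero element of the ultrapower is a unit times a (nonstandard) power of `p`. -/
lemma exists_pPow_mul {x : WUltra p κ} (hx : x ≠ 0) : ∃ (γ : ℕ → ℤ) (u : WittVector p (ℕ → κ)),
    (wittRed p κ u).coeff 0 ≠ 0 ∧ x = pPow p κ γ * wittGerm p κ u := by
  obtain ⟨f, rfl⟩ := seqGerm_surjective _ x
  have hf : ∀ᶠ n in (hyperfilter ℕ : Filter ℕ), f n ≠ 0 := by
    rw [Ne, seqGerm_eq_zero] at hx
    exact (Ultrafilter.eventually_not).2 hx
  have : ∀ n, ∃ (γ : ℤ) (t : WittVector p κ), f n ≠ 0 → t.coeff 0 ≠ 0 ∧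
      f n = (p : FractionRing (WittVector p κ)) ^ γ * algebraMap _ _ t := by
    intro n
    by_cases h : f n = 0
    · exact ⟨0, 0, fun h' => absurd h h'⟩
    · obtain ⟨γ, t, ht⟩ := exists_zpow_mul h
      exact ⟨γ, t, fun _ => ht⟩
  choose γ t ht using this
  obtain ⟨u, hu⟩ := exists_wittAt t
  refine ⟨γ, u, ?_, ?_⟩
  · rw [wittRed_coeff, Ne, seqGerm_eq_zero]
    refine (Ultrafilter.eventually_not).1 ?_
    filter_upwards [hf] with n hn
    have := (ht n hn).1
    rwa [← hu n] at this
  · rw [wittGerm_apply, pPow, ← map_mul, seqGerm_eq]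
    filter_upwards [hf] with n hn
    rw [Pi.mul_apply, hu n]
    exact (ht n hn).2

end WittSeq

/-! ### The coarse valuation on the ultrapower -/

noncomputable section WittVal
open Filter

variable (p : ℕ) [Fact p.Prime] (κ : Type*) [Field κ] [CharP κ p] [PerfectRing κ p]

lemma integral_or_inv (x : WUltra p κ) :
    (∃ u, wittGerm p κ u = x) ∨ ∃ u, wittGerm p κ u = x⁻¹ := by
  obtain ⟨f, rfl⟩ := seqGerm_surjective _ x
  have h : ∀ n, (∃ t : WittVector p κ, algebraMap _ _ t = f n) ∨
      ∃ t : WittVector p κ, algebraMap _ _ t = (f n)⁻¹ :=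
    fun n => ValuationRing.isInteger_or_isInteger (WittVector p κ) (f n)
  rcases (Ultrafilter.eventually_or).1 (Eventually.of_forall h :
    ∀ᶠ n in ((hyperfilter ℕ : Ultrafilter ℕ) : Filter ℕ), _) with h | h
  · exact Or.inl (exists_wittGerm h)
  · exact Or.inr (exists_wittGerm h)

/-- The coarse valuation ring of the ultrapower, in which `p` is inverted. -/
def coarseRing : ValuationSubring (WUltra p κ) where
  carrier := {x | ∃ (n : ℕ) (u : _), x * (p : WUltra p κ) ^ n = wittGerm p κ u}
  mul_mem' := by
    rintro x y ⟨n, u, hx⟩ ⟨m, w, hy⟩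
    refine ⟨n + m, u * w, ?_⟩
    rw [map_mul, ← hx, ← hy]
    ring
  one_mem' := ⟨0, 1, by simp⟩
  add_mem' := by
    rintro x y ⟨n, u, hx⟩ ⟨m, w, hy⟩
    refine ⟨n + m, u * p ^ m + w * p ^ n, ?_⟩
    simp only [map_add, map_mul, map_pow, map_natCast, ← hx, ← hy]
    ring
  zero_mem' := ⟨0, 0, by simp⟩
  neg_mem' := by
    rintro x ⟨n, u, hx⟩
    exact ⟨n, -u, by rw [neg_mul, hx, map_neg]⟩
  mem_or_inv_mem' := by
    intro x
    rcases integral_or_inv p κ x with ⟨u, hu⟩ | ⟨u, hu⟩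
    · exact Or.inl ⟨0, u, by simp [hu]⟩
    · exact Or.inr ⟨0, u, by simp [hu]⟩

/-- The coarse valuation of the ultrapower: its residue field has characteristic zero. -/
abbrev cval : Valuation (WUltra p κ) (coarseRing p κ).ValueGroup := (coarseRing p κ).valuation

variable {p κ}

lemma cval_le_one {x : WUltra p κ} :
    cval p κ x ≤ 1 ↔ ∃ (n : ℕ) (u : _), x * (p : WUltra p κ) ^ n = wittGerm p κ u :=
  (coarseRing p κ).valuation_le_one_iff x

lemma cval_wittGerm_le (u : WittVector p (ℕ → κ)) : cval p κ (wittGerm p κ u) ≤ 1 :=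
  cval_le_one.2 ⟨0, u, by simp⟩

lemma cval_p : cval p κ (p : WUltra p κ) = 1 := by
  refine le_antisymm (cval_le_one.2 ⟨0, p, by simp⟩) ?_
  have : cval p κ (p : WUltra p κ)⁻¹ ≤ 1 :=
    cval_le_one.2 ⟨1, 1, by simp [inv_mul_cancel₀ (p_ne_zero (p := p) (κ := κ))]⟩
  rw [map_inv₀] at this
  exact (inv_le_one₀ (zero_lt_iff.2 ((cval p κ).ne_zero_iff.2 p_ne_zero))).1 this

lemma cval_lt_one {x : WUltra p κ} :
    cval p κ x < 1 ↔ ∃ u, wittGerm p κ u = x ∧ wittRed p κ u = 0 := by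
  have hp := p_ne_zero (p := p) (κ := κ)
  constructor
  · intro h
    have key : ∀ m : ℕ, ∃ t, wittGerm p κ t * (p : WUltra p κ) ^ m = x := by
      intro m
      rcases integral_or_inv p κ (x * ((p : WUltra p κ) ^ m)⁻¹) with ⟨t, ht⟩ | ⟨t, ht⟩
      · exact ⟨t, by rw [ht, inv_mul_cancel_right₀ (pow_ne_zero _ hp)]⟩
      · rcases eq_or_ne x 0 with rfl | hx
        · exact ⟨0, by simp⟩
        exfalso
        have h1 := cval_wittGerm_le t
        have h0 : 0 < cval p κ x := zero_lt_iff.2 ((cval p κ).ne_zero_iff.2 hx)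
        simp only [ht, map_inv₀, map_mul, map_pow, cval_p, one_pow, inv_one, mul_one] at h1
        exact absurd h (not_lt.2 ((inv_le_one₀ h0).1 h1))
    obtain ⟨u, hu⟩ := key 0
    rw [pow_zero, mul_one] at hu
    refine ⟨u, hu, wittRed_eq_zero_iff.2 fun m => ?_⟩
    obtain ⟨t, ht⟩ := key m
    exact ⟨t, by rw [hu, ht]⟩
  · rintro ⟨u, rfl, hu⟩
    refine lt_of_le_of_ne (cval_wittGerm_le u) fun h1 => ?_
    have h2 : cval p κ (wittGerm p κ u)⁻¹ ≤ 1 := by rw [map_inv₀, h1, inv_one]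
    have h0 : wittGerm p κ u ≠ 0 := (cval p κ).ne_zero_iff.1 (by rw [h1]; exact one_ne_zero)
    obtain ⟨n, w, hw⟩ := cval_le_one.1 h2
    obtain ⟨t, ht⟩ := wittRed_eq_zero_iff.1 hu (n + 1)
    refine not_p_mul (w * t) (mul_right_cancel₀ (pow_ne_zero n hp) ?_)
    rw [map_mul, ← hw, one_mul]
    calc (wittGerm p κ u)⁻¹ * (p : WUltra p κ) ^ n * wittGerm p κ t * p * p ^ n
        = (wittGerm p κ u)⁻¹ * (wittGerm p κ t * p ^ (n + 1)) * p ^ n := by ring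
      _ = p ^ n := by rw [← ht, inv_mul_cancel₀ h0, one_mul]

lemma cval_wittGerm_lt {u : WittVector p (ℕ → κ)} :
    cval p κ (wittGerm p κ u) < 1 ↔ wittRed p κ u = 0 := by
  rw [cval_lt_one]
  constructor
  · rintro ⟨w, hw, hw0⟩
    rw [← wittRed_eq_of_wittGerm_eq hw, hw0]
  · exact fun h => ⟨u, rfl, h⟩

lemma cval_wittGerm_eq_one {u : WittVector p (ℕ → κ)} (h : (wittRed p κ u).coeff 0 ≠ 0) :
    cval p κ (wittGerm p κ u) = 1 := by
  refine le_antisymm (cval_wittGerm_le u) (not_lt.1 fun h1 => h ?_)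
  rw [cval_wittGerm_lt.1 h1, WittVector.zero_coeff]

lemma resCharZero_cval : ResCharZero (cval p κ) := by
  intro n hn
  rw [← map_natCast (wittGerm p κ) n]
  refine le_antisymm (cval_wittGerm_le _) (not_lt.1 fun h1 => ?_)
  rw [cval_wittGerm_lt, map_natCast] at h1
  have hchar : (n : WittVector p (Ultra κ)) ≠ 0 := by
    obtain ⟨a, m, hm, rfl⟩ := Nat.exists_eq_pow_mul_and_not_dvd hn p (Fact.out : p.Prime).ne_one
    rw [Nat.cast_mul, Nat.cast_pow]
    refine mul_ne_zero (pow_ne_zero _ (WittVector.p_nonzero p _)) fun h0 => hm ?_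
    have := congrArg (WittVector.constantCoeff (p := p) (R := Ultra κ)) h0
    rw [map_natCast, map_zero] at this
    exact (CharP.cast_eq_zero_iff (Ultra κ) p m).1 this
  exact hchar h1

/-- Contraction principle in a `q`-adically complete ring. -/
lemma exists_fixed_point {A : Type*} [CommRing A] (q : A) [IsAdicComplete (Ideal.span {q}) A]
    (h : A[X]) : ∃ s, s = q * h.eval s - 1 := by
  set f : ℕ → A := fun n => (fun s => q * h.eval s - 1)^[n] 0 with hf
  have hsucc : ∀ n, f (n + 1) = q * h.eval (f n) - 1 := fun n => by
    simp only [hf, Function.iterate_succ_apply']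
  have hstep : ∀ n, q ^ n ∣ f (n + 1) - f n := by
    intro n
    induction n with
    | zero => simp
    | succ n ih =>
      have : f (n + 1 + 1) - f (n + 1) = q * (h.eval (f (n + 1)) - h.eval (f n)) := by
        rw [hsucc (n + 1), hsucc n]
        ring
      rw [this, pow_succ']
      exact mul_dvd_mul_left q (ih.trans (sub_dvd_eval_sub _ _ h))
  have hcauchy : ∀ {m n}, m ≤ n → f m ≡ f n [SMOD (Ideal.span {q} ^ m • ⊤ : Submodule A A)] := by
    intro m n hmn
    rw [SModEq.sub_mem, smul_eq_mul, Ideal.mul_top, Ideal.span_singleton_pow,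
      Ideal.mem_span_singleton]
    induction n, hmn using Nat.le_induction with
    | base => simp
    | succ n hmn ih =>
      have : f m - f (n + 1) = (f m - f n) - (f (n + 1) - f n) := by ring
      rw [this]
      exact dvd_sub ih ((pow_dvd_pow q hmn).trans (hstep n))
  obtain ⟨s, hs⟩ := IsPrecomplete.prec (inferInstance : IsPrecomplete (Ideal.span {q}) A) hcauchy
  refine ⟨s, sub_eq_zero.1 (IsHausdorff.haus (inferInstance : IsHausdorff (Ideal.span {q}) A) _
    fun n => ?_)⟩
  have hs' : ∀ n, q ^ n ∣ f n - s := by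
    intro n
    have := hs n
    rwa [SModEq.sub_mem, smul_eq_mul, Ideal.mul_top, Ideal.span_singleton_pow,
      Ideal.mem_span_singleton] at this
  rw [SModEq.sub_mem, smul_eq_mul, Ideal.mul_top, Ideal.span_singleton_pow,
      Ideal.mem_span_singleton]
  have : s - (q * h.eval s - 1) - 0 =
      q * (h.eval (f n) - h.eval s) - (f (n + 1) - s) := by
    rw [hsucc n]
    ring
  rw [this]
  exact dvd_sub (Dvd.dvd.mul_left ((hs' n).trans (sub_dvd_eval_sub _ _ h)) q)
    ((pow_dvd_pow q n.le_succ).trans (hs' (n + 1)))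

/-- Hensel's lemma for the coarse valuation. After the substitution `z = (q₀ / q₁) s` the equation
`q(z) = 0` becomes `s = -1 - ∑ rᵢ sⁱ` with all `rᵢ` divisible by `p`, and it is solved by
contraction in the `p`-adically complete ring of Witt vectors over the ring of sequences. -/
lemma isHenselVal_cval : IsHenselVal (cval p κ) := by
  intro q hq hq0 hq1
  have hp := p_ne_zero (p := p) (κ := κ)
  rcases eq_or_ne (q.coeff 0) 0 with h0 | h0
  · exact ⟨0, by simp, by rw [← coeff_zero_eq_eval_zero, h0]⟩
  have h1 : q.coeff 1 ≠ 0 := (cval p κ).ne_zero_iff.1 (by rw [hq1]; exact one_ne_zero)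
  set r : ℕ → WUltra p κ := fun i => q.coeff (i + 2) * q.coeff 0 ^ (i + 1) / q.coeff 1 ^ (i + 2)
    with hr
  have hrlt : ∀ i, cval p κ (r i) < 1 := by
    intro i
    simp only [hr, map_div₀, map_mul, map_pow, hq1, one_pow, div_one]
    exact mul_lt_one_of_nonneg_of_lt_one_right (hq _) zero_le (pow_lt_one₀ zero_le hq0 (by omega))
  have hw : ∀ i, ∃ w, r i = -(wittGerm p κ w * p) := by
    intro i
    obtain ⟨u, hu, hu0⟩ := cval_lt_one.1 (hrlt i)
    obtain ⟨t, ht⟩ := wittRed_eq_zero_iff.1 hu0 1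
    exact ⟨-t, by rw [← hu, ht]; simp⟩
  choose w hw using hw
  set d := q.natDegree with hd
  set h : (WittVector p (ℕ → κ))[X] := ∑ i ∈ Finset.range d, C (w i) * X ^ (i + 2) with hh
  obtain ⟨s, hs⟩ := exists_fixed_point (p : WittVector p (ℕ → κ)) h
  set σ := wittGerm p κ s with hσ
  have hσ' : σ = - ∑ i ∈ Finset.range d, r i * σ ^ (i + 2) - 1 := by
    have := congrArg (wittGerm p κ) hs
    rw [hh, eval_finsetSum] at this
    simp only [eval_mul, eval_C, eval_pow, eval_X, map_sub, map_mul, map_sum, map_natCast,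
      map_pow, map_one, ← hσ] at this
    refine this.trans ?_
    congr 1
    rw [Finset.mul_sum, ← Finset.sum_neg_distrib]
    refine Finset.sum_congr rfl fun i _ => ?_
    rw [hw]
    ring
  refine ⟨q.coeff 0 / q.coeff 1 * σ, ?_, ?_⟩
  · rw [map_mul, map_div₀, hq1, div_one]
    exact mul_lt_one_of_nonneg_of_lt_one_left zero_le hq0 (cval_wittGerm_le s)
  · rw [eval_eq_sum_range' (n := d + 2) (by omega), Finset.sum_range_succ', Finset.sum_range_succ']
    have e : ∀ i, q.coeff (i + 1 + 1) * (q.coeff 0 / q.coeff 1 * σ) ^ (i + 1 + 1) =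
        q.coeff 0 * (r i * σ ^ (i + 2)) := by
      intro i
      simp only [hr]
      rw [mul_pow, div_pow]
      field_simp
      ring
    simp only [e, ← Finset.mul_sum]
    have e2 : ∑ i ∈ Finset.range d, r i * σ ^ (i + 2) = - σ - 1 := by
      linear_combination hσ'
    rw [e2]
    simp only [zero_add, pow_one, pow_zero]
    field_simp
    ring

end WittVal

/-! ### The correspondence of leading terms of the two ultrapowers -/

noncomputable section WittCorr
open Filter

section One
variable {p : ℕ} [Fact p.Prime] {κ : Type*} [Field κ] [CharP κ p] [PerfectRing κ p]

lemma zpow_eq_of_le {a b : WittVector p κ} {i j : ℤ} (hij : i ≤ j) (ha : a.coeff 0 ≠ 0)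
    (hab : (p : FractionRing (WittVector p κ)) ^ i * algebraMap _ _ a = p ^ j * algebraMap _ _ b) :
    i = j := by
  have hp := WittVector.FractionRing.p_nonzero p κ
  obtain ⟨n, rfl⟩ := Int.le.dest hij
  rcases n with _ | n
  · simp
  exfalso
  rw [zpow_add₀ hp, mul_assoc] at hab
  have h1 := mul_left_cancel₀ (zpow_ne_zero _ hp) hab
  have h2 : a = b * (p : WittVector p κ) ^ n * p := by
    apply IsFractionRing.injective (WittVector p κ) (FractionRing (WittVector p κ))
    rw [h1]
    simp only [zpow_natCast, map_mul, map_pow, map_natCast]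
    ring
  exact ha (by rw [h2, WittVector.mul_charP_coeff_zero])

lemma cval_pPow_le {γ : ℕ → ℤ} : cval p κ (pPow p κ γ) ≤ 1 ↔
    ∃ m : ℕ, ∀ᶠ n in (hyperfilter ℕ : Filter ℕ), -(m : ℤ) ≤ γ n := by
  rw [cval_le_one]
  have hp := WittVector.FractionRing.p_nonzero p κ
  constructor
  · rintro ⟨m, u, h⟩
    refine ⟨m, ?_⟩
    have h1 : pPow p κ (γ + fun _ => (m : ℤ)) = wittGerm p κ u := by
      rw [pPow_add, pPow_const, zpow_natCast, h]
    rw [pPow, wittGerm_apply, seqGerm_eq] at h1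
    filter_upwards [h1] with n hn
    by_contra hlt
    have hlt' : γ n + m < 0 := by omega
    refine hlt'.ne (zpow_eq_of_le (a := 1) (b := wittAt p κ n u) hlt'.le (by simp) ?_)
    rw [zpow_zero, map_one, mul_one, one_mul]
    exact hn
  · rintro ⟨m, hm⟩
    refine ⟨m, ?_⟩
    have h1 : pPow p κ (γ + fun _ => (m : ℤ)) = pPow p κ γ * (p : WUltra p κ) ^ m := by
      rw [pPow_add, pPow_const, zpow_natCast]
    rw [← h1]
    suffices h : ∃ u, wittGerm p κ u = pPow p κ (γ + fun _ => (m : ℤ)) by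
      obtain ⟨u, hu⟩ := h
      exact ⟨u, hu.symm⟩
    refine exists_wittGerm ?_
    filter_upwards [hm] with n hn
    obtain ⟨j, hj⟩ : ∃ j : ℕ, γ n + m = j := ⟨(γ n + m).toNat, by omega⟩
    exact ⟨p ^ j, by rw [Pi.add_apply, hj]; simp⟩

/-- A power of `p` with infinite exponent has zero reduction. -/
lemma exists_pPow_red_zero {γ : ℕ → ℤ}
    (h : ∀ m : ℕ, ∀ᶠ n in (hyperfilter ℕ : Filter ℕ), (m : ℤ) ≤ γ n) :
    ∃ u, wittGerm p κ u = pPow p κ γ ∧ wittRed p κ u = 0 := by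
  have key : ∀ m : ℕ, ∃ t, wittGerm p κ t * (p : WUltra p κ) ^ m = pPow p κ γ := by
    intro m
    obtain ⟨t, ht⟩ : ∃ u, wittGerm p κ u = pPow p κ (γ + fun _ => (-m : ℤ)) := by
      refine exists_wittGerm ?_
      filter_upwards [h m] with n hn
      obtain ⟨j, hj⟩ : ∃ j : ℕ, γ n + -m = j := ⟨(γ n - m).toNat, by omega⟩
      exact ⟨p ^ j, by rw [Pi.add_apply, hj]; simp⟩
    refine ⟨t, ?_⟩
    rw [ht, pPow_add, pPow_const, zpow_neg, zpow_natCast,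
      inv_mul_cancel_right₀ (pow_ne_zero _ p_ne_zero)]
  obtain ⟨u, hu⟩ := key 0
  rw [pow_zero, mul_one] at hu
  refine ⟨u, hu, wittRed_eq_zero_iff.2 fun m => ?_⟩
  obtain ⟨t, ht⟩ := key m
  exact ⟨t, by rw [hu, ht]⟩

/-- The decomposition of an element as unit times power of `p` is unique. -/
lemma pPow_mul_unique {γ δ : ℕ → ℤ} {u w : WittVector p (ℕ → κ)}
    (hu : (wittRed p κ u).coeff 0 ≠ 0) (hw : (wittRed p κ w).coeff 0 ≠ 0)
    (h : pPow p κ γ * wittGerm p κ u = pPow p κ δ * wittGerm p κ w) :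
    pPow p κ γ = pPow p κ δ ∧ wittGerm p κ u = wittGerm p κ w := by
  have hp := WittVector.FractionRing.p_nonzero p κ
  have hγ : pPow p κ γ = pPow p κ δ := by
    rw [wittRed_coeff, Ne, seqGerm_eq_zero] at hu hw
    apply pPow_congr
    rw [pPow, pPow, wittGerm_apply, wittGerm_apply, ← map_mul, ← map_mul, seqGerm_eq] at h
    filter_upwards [(Ultrafilter.eventually_not).2 hu, (Ultrafilter.eventually_not).2 hw, h]
      with n h1 h2 h3
    rcases le_total (γ n) (δ n) with hle | hle
    · exact zpow_eq_of_le hle h1 h3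
    · exact (zpow_eq_of_le hle h2 h3.symm).symm
  refine ⟨hγ, ?_⟩
  rw [hγ] at h
  exact mul_left_cancel₀ (pPow_ne_zero δ) h

end One

variable {p : ℕ} [Fact p.Prime] {κ₁ κ₂ L : Type*} [Field κ₁] [CharP κ₁ p] [PerfectRing κ₁ p]
  [Field κ₂] [CharP κ₂ p] [PerfectRing κ₂ p] [Field L] [CharP L p] [PerfectRing L p]
  (i₁ : L →+* Ultra κ₁) (i₂ : L →+* Ultra κ₂)

/-- Pairs of integral elements (for the fine valuation) whose reductions come from one Witt vector
over `L`. -/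
def redPairs : Subring (WUltra p κ₁ × WUltra p κ₂) :=
  ((((WittVector.map i₁).prod (WittVector.map i₂)).range.comap
    ((wittRed p κ₁).prodMap (wittRed p κ₂)))).map ((wittGerm p κ₁).prodMap (wittGerm p κ₂))

lemma mem_redPairs {a : WUltra p κ₁ × WUltra p κ₂} : a ∈ redPairs i₁ i₂ ↔
    ∃ u u' s, a = (wittGerm p κ₁ u, wittGerm p κ₂ u') ∧ wittRed p κ₁ u = WittVector.map i₁ s ∧
      wittRed p κ₂ u' = WittVector.map i₂ s := by
  constructor
  · rintro ⟨⟨u, u'⟩, ⟨s, hs⟩, rfl⟩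
    refine ⟨u, u', s, rfl, ?_, ?_⟩
    · exact (congrArg Prod.fst hs).symm
    · exact (congrArg Prod.snd hs).symm
  · rintro ⟨u, u', s, rfl, h1, h2⟩
    exact ⟨(u, u'), ⟨s, Prod.ext h1.symm h2.symm⟩, rfl⟩

/-- Pairs that are integral for the coarse valuation and have matching residues. -/
def resPairs : Subring (WUltra p κ₁ × WUltra p κ₂) where
  carrier := {a | ∃ n : ℕ, a * (p : WUltra p κ₁ × WUltra p κ₂) ^ n ∈ redPairs i₁ i₂}
  mul_mem' := by
    rintro a b ⟨n, ha⟩ ⟨m, hb⟩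
    refine ⟨n + m, ?_⟩
    convert (redPairs i₁ i₂).mul_mem ha hb using 1
    ring
  one_mem' := ⟨0, by simp⟩
  add_mem' := by
    rintro a b ⟨n, ha⟩ ⟨m, hb⟩
    refine ⟨n + m, ?_⟩
    have hp : (p : WUltra p κ₁ × WUltra p κ₂) ∈ redPairs i₁ i₂ := natCast_mem _ _
    convert (redPairs i₁ i₂).add_mem ((redPairs i₁ i₂).mul_mem ha (pow_mem hp m))
      ((redPairs i₁ i₂).mul_mem hb (pow_mem hp n)) using 1
    ring
  zero_mem' := ⟨0, by simp⟩
  neg_mem' := by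
    rintro a ⟨n, ha⟩
    exact ⟨n, by rw [neg_mul]; exact (redPairs i₁ i₂).neg_mem ha⟩

/-- Nonzero pairs with matching leading terms: the same power of `p` times units whose reductions
come from one Witt vector over `L`. -/
def IsLead (a : WUltra p κ₁ × WUltra p κ₂) : Prop :=
  ∃ (γ : ℕ → ℤ) (u : _) (u' : _) (s : WittVector p L),
    a = (pPow p κ₁ γ * wittGerm p κ₁ u, pPow p κ₂ γ * wittGerm p κ₂ u') ∧
    wittRed p κ₁ u = WittVector.map i₁ s ∧ wittRed p κ₂ u' = WittVector.map i₂ s ∧ s.coeff 0 ≠ 0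

variable {i₁ i₂}

lemma red_coeff_ne {κ : Type*} [Field κ] {i : L →+* Ultra κ} {u : WittVector p (ℕ → κ)}
    {s : WittVector p L} (h : wittRed p κ u = WittVector.map i s) (hs : s.coeff 0 ≠ 0) :
    (wittRed p κ u).coeff 0 ≠ 0 := by
  rw [h, WittVector.map_coeff]
  exact (map_ne_zero i).2 hs

lemma wittGerm_ne_zero {κ : Type*} [Field κ] [CharP κ p] [PerfectRing κ p]
    {u : WittVector p (ℕ → κ)} (h : (wittRed p κ u).coeff 0 ≠ 0) : wittGerm p κ u ≠ 0 :=
  (cval p κ).ne_zero_iff.1 (by rw [cval_wittGerm_eq_one h]; exact one_ne_zero)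

/-- A sequence of Witt vectors whose reduction is a unit coming from `L` is invertible, with
inverse of the same kind. -/
lemma exists_wittGerm_inv {κ : Type*} [Field κ] [CharP κ p] [PerfectRing κ p] {i : L →+* Ultra κ}
    {u : WittVector p (ℕ → κ)} {s t : WittVector p L} (h : wittRed p κ u = WittVector.map i s)
    (hs : s.coeff 0 ≠ 0) (hst : s * t = 1) :
    ∃ w, wittGerm p κ w = (wittGerm p κ u)⁻¹ ∧ wittRed p κ w = WittVector.map i t := by
  have h0 := red_coeff_ne h hs
  have h1 : wittGerm p κ u ≠ 0 := wittGerm_ne_zero h0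
  have hc : ∀ᶠ n in (hyperfilter ℕ : Filter ℕ), u.coeff 0 n ≠ 0 := by
    rw [wittRed_coeff, Ne, seqGerm_eq_zero] at h0
    exact (Ultrafilter.eventually_not).2 h0
  have : ∃ w, wittGerm p κ w = seqGerm _ fun n => (algebraMap _ _ (wittAt p κ n u))⁻¹ := by
    refine exists_wittGerm ?_
    filter_upwards [hc] with n hn
    obtain ⟨t, ht⟩ := (WittVector.isUnit_of_coeff_zero_ne_zero (wittAt p κ n u) hn).exists_right_inv
    refine ⟨t, eq_inv_of_mul_eq_one_right ?_⟩
    rw [← map_mul, ht, map_one]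
  obtain ⟨w, hw⟩ := this
  have hw' : wittGerm p κ w = (wittGerm p κ u)⁻¹ := by rw [hw]; rfl
  refine ⟨w, hw', ?_⟩
  have h2 : wittRed p κ (u * w) = wittRed p κ 1 :=
    wittRed_eq_of_wittGerm_eq (by rw [map_mul, hw', mul_inv_cancel₀ h1, map_one])
  rw [map_mul, map_one, h] at h2
  have h3 : WittVector.map i s * WittVector.map i t = 1 := by rw [← map_mul, hst, map_one]
  have h4 : WittVector.map i s ≠ 0 := left_ne_zero_of_mul_eq_one h3
  exact mul_left_cancel₀ h4 (h2.trans h3.symm)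

lemma IsLead.ne_zero {a : WUltra p κ₁ × WUltra p κ₂} (h : IsLead i₁ i₂ a) :
    a.1 ≠ 0 ∧ a.2 ≠ 0 := by
  obtain ⟨γ, u, u', s, rfl, h1, h2, hs⟩ := h
  exact ⟨mul_ne_zero (pPow_ne_zero _) (wittGerm_ne_zero (red_coeff_ne h1 hs)),
    mul_ne_zero (pPow_ne_zero _) (wittGerm_ne_zero (red_coeff_ne h2 hs))⟩

lemma pPow_pair_mem {γ : ℕ → ℤ} (h : ∀ᶠ n in (hyperfilter ℕ : Filter ℕ), 0 ≤ γ n) :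
    ((pPow p κ₁ γ, pPow p κ₂ γ) : WUltra p κ₁ × WUltra p κ₂) ∈ redPairs i₁ i₂ := by
  by_cases hstd : ∃ m : ℕ, ∀ᶠ n in (hyperfilter ℕ : Filter ℕ), γ n = m
  · obtain ⟨m, hm⟩ := hstd
    rw [pPow_congr (δ := fun _ => (m : ℤ)) hm, pPow_congr (κ := κ₂) (δ := fun _ => (m : ℤ)) hm,
      pPow_const, pPow_const, zpow_natCast, zpow_natCast]
    exact pow_mem (natCast_mem (redPairs i₁ i₂) p) m
  · push Not at hstd
    have hinf : ∀ m : ℕ, ∀ᶠ n in (hyperfilter ℕ : Filter ℕ), (m : ℤ) ≤ γ n := by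
      intro m
      induction m with
      | zero => simpa using h
      | succ m ih =>
        filter_upwards [ih, hstd m] with n h1 h2
        push_cast
        omega
    obtain ⟨u, hu, hu0⟩ := exists_pPow_red_zero (p := p) (κ := κ₁) hinf
    obtain ⟨w, hw, hw0⟩ := exists_pPow_red_zero (p := p) (κ := κ₂) hinf
    exact (mem_redPairs i₁ i₂).2 ⟨u, w, 0, by rw [hu, hw], by simp [hu0], by simp [hw0]⟩

variable (i₁ i₂)

/-- The correspondence of leading terms between the two ultrapowers determined by the two
embeddings of `L`. -/
def wittCorr : Corr (cval p κ₁) (cval p κ₂) where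
  M := {a | a = 0 ∨ IsLead i₁ i₂ a}
  N := resPairs i₁ i₂
  zero_mem := Or.inl rfl
  mul_mem := by
    rintro a b (rfl | ha) (rfl | hb)
    · exact Or.inl (by simp)
    · exact Or.inl (by simp)
    · exact Or.inl (by simp)
    · obtain ⟨γ, u, u', s, rfl, h1, h2, hs⟩ := ha
      obtain ⟨δ, w, w', t, rfl, h3, h4, ht⟩ := hb
      refine Or.inr ⟨γ + δ, u * w, u' * w', s * t, ?_, ?_, ?_, ?_⟩
      · rw [pPow_add, pPow_add, map_mul, map_mul, Prod.mk_mul_mk, mul_mul_mul_comm,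
          mul_mul_mul_comm (pPow p κ₂ γ)]
      · rw [map_mul, map_mul, h1, h3]
      · rw [map_mul, map_mul, h2, h4]
      · rw [WittVector.mul_coeff_zero]
        exact mul_ne_zero hs ht
  inv_mem := by
    rintro a (rfl | ha)
    · exact Or.inl (Prod.ext (by simp) (by simp))
    · obtain ⟨γ, u, u', s, rfl, h1, h2, hs⟩ := ha
      obtain ⟨t, hst⟩ := (WittVector.isUnit_of_coeff_zero_ne_zero s hs).exists_right_inv
      obtain ⟨w, hw, hwt⟩ := exists_wittGerm_inv h1 hs hst
      obtain ⟨w', hw', hwt'⟩ := exists_wittGerm_inv h2 hs hst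
      refine Or.inr ⟨-γ, w, w', t, ?_, hwt, hwt', fun h => ?_⟩
      · rw [hw, hw', pPow_neg, pPow_neg, ← mul_inv, ← mul_inv]
        rfl
      · have := congrArg (fun x => WittVector.coeff x 0) hst
        simp [WittVector.mul_coeff_zero, h] at this
  zero_iff := by
    rintro a (rfl | ha)
    · simp
    · exact iff_of_false ha.ne_zero.1 ha.ne_zero.2
  le_one_iff := by
    rintro a (rfl | ha)
    · simp
    · obtain ⟨γ, u, u', s, rfl, h1, h2, hs⟩ := ha
      simp only [map_mul, cval_wittGerm_eq_one (red_coeff_ne h1 hs),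
        cval_wittGerm_eq_one (red_coeff_ne h2 hs), mul_one]
      rw [cval_pPow_le, cval_pPow_le]
  N_of_M := by
    rintro a (rfl | ha) hle
    · exact (resPairs i₁ i₂).zero_mem
    · obtain ⟨γ, u, u', s, rfl, h1, h2, hs⟩ := ha
      simp only [map_mul, cval_wittGerm_eq_one (red_coeff_ne h1 hs), mul_one] at hle
      obtain ⟨m, hm⟩ := cval_pPow_le.1 hle
      refine ⟨m, ?_⟩
      have hm' : ∀ᶠ n in (hyperfilter ℕ : Filter ℕ), 0 ≤ (γ + fun _ : ℕ => (m : ℤ)) n := by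
        filter_upwards [hm] with n hn
        rw [Pi.add_apply]
        omega
      have h3 := (redPairs i₁ i₂).mul_mem (pPow_pair_mem (i₁ := i₁) (i₂ := i₂) hm')
        ((mem_redPairs i₁ i₂).2 ⟨u, u', s, rfl, h1, h2⟩)
      rw [pPow_add, pPow_add, pPow_const, pPow_const, zpow_natCast, zpow_natCast] at h3
      convert h3 using 1
      refine Prod.ext ?_ ?_
      · simp only [Prod.fst_mul, Prod.pow_fst, Prod.fst_natCast]
        ring
      · simp only [Prod.snd_mul, Prod.pow_snd, Prod.snd_natCast]
        ring
  M_of_N := by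
    rintro a ⟨n, ha⟩ hone
    right
    obtain ⟨u, u', s, hau, h1, h2⟩ := (mem_redPairs i₁ i₂).1 ha
    have hu1 : a.1 * (p : WUltra p κ₁) ^ n = wittGerm p κ₁ u := congrArg Prod.fst hau
    have hu2 : a.2 * (p : WUltra p κ₂) ^ n = wittGerm p κ₂ u' := congrArg Prod.snd hau
    have hs0 : s ≠ 0 := by
      rintro rfl
      rw [map_zero, ← cval_wittGerm_lt, ← hu1, map_mul, map_pow, cval_p, hone] at h1
      simp at h1
    obtain ⟨m, t, ht, hst⟩ := WittVector.exists_eq_pow_p_mul s hs0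
    have e1 : wittRed p κ₁ u = WittVector.map i₁ t * p ^ m := by
      rw [h1, hst, map_mul, map_pow, map_natCast, mul_comm]
    have e2 : wittRed p κ₂ u' = WittVector.map i₂ t * p ^ m := by
      rw [h2, hst, map_mul, map_pow, map_natCast, mul_comm]
    obtain ⟨w, hw, hwt⟩ := exists_div e1
    obtain ⟨w', hw', hwt'⟩ := exists_div e2
    refine ⟨fun _ => (m : ℤ) - n, w, w', t, ?_, hwt, hwt', ht⟩
    have hp1 := p_ne_zero (p := p) (κ := κ₁)
    have hp2 := p_ne_zero (p := p) (κ := κ₂)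
    rw [pPow_const, pPow_const, zpow_sub₀ hp1, zpow_sub₀ hp2]
    simp only [zpow_natCast]
    refine Prod.ext ?_ ?_
    · apply mul_right_cancel₀ (pow_ne_zero n hp1)
      rw [hu1, hw]
      field_simp
    · apply mul_right_cancel₀ (pow_ne_zero n hp2)
      rw [hu2, hw']
      field_simp
  N_le := by
    rintro a ⟨n, ha⟩
    obtain ⟨u, u', s, hau, h1, h2⟩ := (mem_redPairs i₁ i₂).1 ha
    exact cval_le_one.2 ⟨n, u', congrArg Prod.snd hau⟩
  N_lt := by
    rintro a ⟨n, ha⟩ hlt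
    obtain ⟨u, u', s, hau, h1, h2⟩ := (mem_redPairs i₁ i₂).1 ha
    have hu1 : a.1 * (p : WUltra p κ₁) ^ n = wittGerm p κ₁ u := congrArg Prod.fst hau
    have hu2 : a.2 * (p : WUltra p κ₂) ^ n = wittGerm p κ₂ u' := congrArg Prod.snd hau
    have h3 : wittRed p κ₁ u = 0 := by
      rw [← cval_wittGerm_lt, ← hu1, map_mul, map_pow, cval_p, one_pow, mul_one]
      exact hlt
    rw [h3] at h1
    have hs : s = 0 := WittVector.map_injective i₁ i₁.injective (by rw [← h1, map_zero])
    rw [hs, map_zero, ← cval_wittGerm_lt, ← hu2, map_mul, map_pow, cval_p, one_pow, mul_one] at h2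
    exact h2
  one_add := by
    intro b hb
    obtain ⟨w, rfl, hw⟩ := cval_lt_one.1 hb
    refine Or.inr ⟨0, 1, 1 + w, 1, ?_, by simp, by simp [hw], by simp⟩
    rw [pPow_zero, pPow_zero]
    simp

end WittCorr

/-! ### Saturation of the correspondence -/

noncomputable section WittSat
open Filter

variable {p : ℕ} [Fact p.Prime] {κ₁ κ₂ L : Type*} [Field κ₁] [CharP κ₁ p] [PerfectRing κ₁ p]
  [Field κ₂] [CharP κ₂ p] [PerfectRing κ₂ p] [Field L] [CharP L p] [PerfectRing L p]
  (i₁ : L →+* Ultra κ₁) (i₂ : L →+* Ultra κ₂)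

variable {i₁ i₂} in
/-- The leading term of the first entry determines that of the second. -/
lemma IsLead.snd_eq {γ : ℕ → ℤ} {u : WittVector p (ℕ → κ₁)} {s : WittVector p L}
    (hu : wittRed p κ₁ u = WittVector.map i₁ s) (hs : s.coeff 0 ≠ 0) {y : WUltra p κ₂}
    (h : IsLead i₁ i₂ (pPow p κ₁ γ * wittGerm p κ₁ u, y)) :
    ∃ u', y = pPow p κ₂ γ * wittGerm p κ₂ u' ∧ wittRed p κ₂ u' = WittVector.map i₂ s := by
  obtain ⟨δ, w, w', t, h0, h1, h2, ht⟩ := h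
  have e1 := congrArg Prod.fst h0
  have e2 := congrArg Prod.snd h0
  simp only at e1 e2
  obtain ⟨h3, h4⟩ := pPow_mul_unique (red_coeff_ne hu hs) (red_coeff_ne h1 ht) e1
  have hst : s = t := WittVector.map_injective i₁ i₁.injective (by
    rw [← hu, ← h1, wittRed_eq_of_wittGerm_eq h4])
  refine ⟨w', ?_, by rw [h2, hst]⟩
  have h5 : pPow p κ₂ γ = pPow p κ₂ δ := by
    apply pPow_congr
    rw [pPow, pPow, seqGerm_eq] at h3
    filter_upwards [h3] with n hn
    rcases le_total (γ n) (δ n) with hle | hle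
    · exact zpow_eq_of_le (κ := κ₁) (a := 1) (b := 1) hle (by simp) (by rw [hn])
    · exact (zpow_eq_of_le (κ := κ₁) (a := 1) (b := 1) hle (by simp) (by rw [hn])).symm
  rw [h5, e2]

lemma wittCorr_saturated : (wittCorr i₁ i₂ : Corr (cval p κ₁) (cval p κ₂)).Saturated := by
  classical
  intro x S hS hx hfin
  have : Countable S := hS.to_subtype
  have hlead : ∀ a ∈ S, ∀ y : WUltra p κ₂, ((x, y) : WUltra p κ₁ × WUltra p κ₂) - a ∈
      (wittCorr i₁ i₂).M → IsLead i₁ i₂ (x - a.1, y - a.2) := by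
    rintro a ha y (h | h)
    · exact absurd (sub_eq_zero.1 (congrArg Prod.fst h)).symm (hx a ha)
    · exact h
  have hdata : ∀ a : S, ∃ (γ : ℕ → ℤ) (u : _) (s : WittVector p L),
      x - a.1.1 = pPow p κ₁ γ * wittGerm p κ₁ u ∧ wittRed p κ₁ u = WittVector.map i₁ s ∧
      s.coeff 0 ≠ 0 := by
    rintro ⟨a, ha⟩
    obtain ⟨y, hy⟩ := hfin {a} (by simpa using ha)
    obtain ⟨γ, u, u', s, h0, h1, h2, hs⟩ := hlead a ha y (hy a (by simp))
    exact ⟨γ, u, s, congrArg Prod.fst h0, h1, hs⟩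
  choose γ u s hxa hred hs using hdata
  choose β hβ using fun a : S => seqGerm_surjective _ a.1.2
  choose d hd using fun (a : S) (i : ℕ) => seqGerm_surjective κ₂ (i₂ ((s a).coeff i))
  set P : S × ℕ → ℕ → FractionRing (WittVector p κ₂) → Prop := fun ai n y =>
    ∃ t : WittVector p κ₂, y - β ai.1 n = (p : FractionRing (WittVector p κ₂)) ^ (γ ai.1 n) *
      algebraMap _ _ t ∧ t.coeff ai.2 = d ai.1 ai.2 n with hP
  have hp := WittVector.FractionRing.p_nonzero p κ₂
  obtain ⟨y, hy⟩ := exists_seq_of_finite P (by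
    intro F
    obtain ⟨y, hy⟩ := hfin (F.image fun ai => ai.1.1) (by
      intro a ha
      obtain ⟨ai, -, rfl⟩ := Finset.mem_image.1 (Finset.mem_coe.1 ha)
      exact ai.1.2)
    obtain ⟨f, rfl⟩ := seqGerm_surjective _ y
    have : ∀ ai ∈ F, ∀ᶠ n in (hyperfilter ℕ : Filter ℕ), P ai n (f n) := by
      rintro ⟨a, i⟩ hai
      have h1 := hlead a a.2 _ (hy a.1 (Finset.mem_image.2 ⟨(a, i), hai, rfl⟩))
      rw [hxa a] at h1
      obtain ⟨u', h2, h3⟩ := IsLead.snd_eq (hred a) (hs a) h1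
      rw [← hβ a, ← map_sub, pPow, wittGerm_apply, ← map_mul, seqGerm_eq] at h2
      have h4 := congrArg (fun t => WittVector.coeff t i) h3
      simp only [wittRed_coeff, WittVector.map_coeff] at h4
      rw [← hd a i, seqGerm_eq] at h4
      filter_upwards [h2, h4] with n h5 h6
      exact ⟨wittAt p κ₂ n u', h5, h6⟩
    filter_upwards [(eventually_all_finset F).2 this] with n hn
    exact ⟨f n, hn⟩)
  refine ⟨seqGerm _ y, fun a ha => Or.inr ?_⟩
  have hi := fun i => hy (⟨a, ha⟩, i)
  simp only [hP] at hi
  set a' : S := ⟨a, ha⟩ with ha'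
  obtain ⟨u', hu'⟩ := exists_wittAt (p := p) (κ := κ₂) fun n =>
    if h : ∃ t : WittVector p κ₂, y n - β a' n =
      (p : FractionRing (WittVector p κ₂)) ^ (γ a' n) * algebraMap _ _ t then h.choose else 0
  have hu'' : ∀ᶠ n in (hyperfilter ℕ : Filter ℕ), y n - β a' n =
      (p : FractionRing (WittVector p κ₂)) ^ (γ a' n) * algebraMap _ _ (wittAt p κ₂ n u') := by
    filter_upwards [hi 0] with n hn
    obtain ⟨t, ht, -⟩ := hn
    have hex : ∃ t : WittVector p κ₂, y n - β a' n =
      (p : FractionRing (WittVector p κ₂)) ^ (γ a' n) * algebraMap _ _ t := ⟨t, ht⟩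
    rw [hu' n, dif_pos hex]
    exact hex.choose_spec
  refine ⟨γ a', u a', u', s a', Prod.ext (hxa a') ?_, hred a', ?_, hs a'⟩
  · change seqGerm _ y - a.2 = pPow p κ₂ (γ a') * wittGerm p κ₂ u'
    have : a.2 = seqGerm _ (β a') := (hβ a').symm
    rw [this, ← map_sub, pPow, wittGerm_apply, ← map_mul, seqGerm_eq]
    exact hu''
  · ext i
    rw [wittRed_coeff, WittVector.map_coeff, ← hd a' i, seqGerm_eq]
    filter_upwards [hu'', hi i] with n h1 h2
    obtain ⟨t, ht, hti⟩ := h2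
    have : wittAt p κ₂ n u' = t := by
      apply IsFractionRing.injective (WittVector p κ₂) (FractionRing (WittVector p κ₂))
      exact mul_left_cancel₀ (zpow_ne_zero _ hp) (h1.symm.trans ht)
    rw [← hti, ← this]
    rfl

/-- A leading term all of whose coordinates lie in the range of `i₁` has a match. -/
lemma exists_match_of_coeff {γ : ℕ → ℤ} {u : WittVector p (ℕ → κ₁)}
    (hu : (wittRed p κ₁ u).coeff 0 ≠ 0) (h : ∀ i, ∃ l, i₁ l = (wittRed p κ₁ u).coeff i) :
    ∃ y, ((pPow p κ₁ γ * wittGerm p κ₁ u, y) : WUltra p κ₁ × WUltra p κ₂) ∈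
      (wittCorr i₁ i₂).M := by
  choose l hl using h
  choose d hd using fun i => seqGerm_surjective κ₂ (i₂ (l i))
  refine ⟨pPow p κ₂ γ * wittGerm p κ₂ (WittVector.mk p d), Or.inr ⟨γ, u, WittVector.mk p d,
    WittVector.mk p l, rfl, ?_, ?_, ?_⟩⟩
  · ext i
    rw [WittVector.map_coeff, WittVector.coeff_mk, hl]
  · ext i
    rw [WittVector.map_coeff, WittVector.coeff_mk, ← hd]
    rfl
  · intro h0
    rw [WittVector.coeff_mk] at h0
    rw [← hl 0, h0, map_zero] at hu
    exact hu rfl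

lemma wittCorr_mono {L' : Type*} [Field L'] [CharP L' p] [PerfectRing L' p]
    (i₁' : L' →+* Ultra κ₁) (i₂' : L' →+* Ultra κ₂) (j : L →+* L') (h₁ : i₁'.comp j = i₁)
    (h₂ : i₂'.comp j = i₂) : (wittCorr i₁ i₂ : Corr (cval p κ₁) (cval p κ₂)).M ⊆
      (wittCorr i₁' i₂' : Corr (cval p κ₁) (cval p κ₂)).M := by
  rintro a (h | ⟨γ, u, u', s, h0, h1, h2, hs⟩)
  · exact Or.inl h
  · refine Or.inr ⟨γ, u, u', WittVector.map j s, h0, ?_, ?_, ?_⟩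
    · rw [h1, ← h₁]
      ext i
      simp [WittVector.map_coeff]
    · rw [h2, ← h₂]
      ext i
      simp [WittVector.map_coeff]
    · rw [WittVector.map_coeff]
      exact (map_ne_zero j).2 hs

lemma wittCorr_swap {a : WUltra p κ₁ × WUltra p κ₂} (h : a ∈ (wittCorr i₁ i₂).M) :
    a.swap ∈ (wittCorr i₂ i₁).M := by
  rcases h with rfl | ⟨γ, u, u', s, rfl, h1, h2, hs⟩
  · exact Or.inl rfl
  · exact Or.inr ⟨γ, u', u, s, rfl, h2, h1, hs⟩

end WittSat

/-! ### The Łoś theorem and countable closures -/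

noncomputable section Los
open Filter FirstOrder FirstOrder.Language FirstOrder.Ring

attribute [local instance] compatibleRingOfRing

/-- Ring terms commute with ring homomorphisms. -/
lemma term_realize_map {R S α : Type*} [CommRing R] [CommRing S] (f : R →+* S)
    (t : Language.ring.Term α) (v : α → R) : t.realize (fun i => f (v i)) = f (t.realize v) := by
  induction t with
  | var => rfl
  | func g ts ih => cases g <;> simp [Term.realize, ih]

lemma term_realize_seqGerm {k α : Type*} [Field k] (t : Language.ring.Term α) (x : α → ℕ → k) :
    t.realize (fun i => seqGerm k (x i)) = seqGerm k fun n => t.realize fun i => x i n := by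
  rw [term_realize_map]
  congr 1
  funext n
  exact (term_realize_map (Pi.evalRingHom (fun _ : ℕ => k) n) t x).symm

/-- **Łoś's theorem** for the ultrapower of a field in the language of rings. -/
lemma boundedFormula_realize_seqGerm {k α : Type*} [Field k] {m : ℕ}
    (φ : Language.ring.BoundedFormula α m) (x : α → ℕ → k) (v : Fin m → ℕ → k) :
    φ.Realize (fun i => seqGerm k (x i)) (fun i => seqGerm k (v i)) ↔
      ∀ᶠ n in (hyperfilter ℕ : Filter ℕ), φ.Realize (fun i => x i n) fun i => v i n := by
  induction φ with
  | falsum => simp only [BoundedFormula.Realize, eventually_const]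
  | equal t₁ t₂ =>
    have h1 : (Sum.elim (fun i => seqGerm k (x i)) fun i => seqGerm k (v i)) =
        fun i => seqGerm k (Sum.elim x v i) := by ext i; cases i <;> rfl
    have h2 : ∀ n, (Sum.elim (fun i => x i n) fun i => v i n) = fun i => Sum.elim x v i n :=
      fun n => by ext i; cases i <;> rfl
    simp only [BoundedFormula.Realize, h1, h2, term_realize_seqGerm, seqGerm_eq]
  | rel R => cases R
  | imp _ _ ih₁ ih₂ =>
    simp only [BoundedFormula.Realize, ih₁, ih₂]
    exact Ultrafilter.eventually_imp.symm
  | @all m φ ih =>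
    have h1 : ∀ y : ℕ → k, (Fin.snoc (fun i => seqGerm k (v i)) (seqGerm k y) : Fin (m + 1) → _) =
        fun i => seqGerm k ((Fin.snoc v y : Fin (m + 1) → ℕ → k) i) := by
      intro y
      funext i
      refine Fin.lastCases ?_ (fun i => ?_) i <;> simp
    have h2 : ∀ (y : ℕ → k) (n : ℕ), (fun i => (Fin.snoc v y : Fin (m + 1) → ℕ → k) i n) =
        Fin.snoc (fun i => v i n) (y n) := by
      intro y n
      funext i
      refine Fin.lastCases ?_ (fun i => ?_) i <;> simp
    simp only [BoundedFormula.Realize]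
    rw [(seqGerm_surjective k).forall]
    simp only [h1, ih, h2]
    constructor
    · intro h
      by_contra hc
      rw [← Ultrafilter.eventually_not] at hc
      push Not at hc
      obtain ⟨y, hy⟩ : ∃ y : ℕ → k, ∀ n, (∃ z, ¬ φ.Realize (fun i => x i n)
          (Fin.snoc (fun i => v i n) z)) → ¬ φ.Realize (fun i => x i n)
          (Fin.snoc (fun i => v i n) (y n)) :=
        ⟨fun n => Classical.epsilon fun z => ¬ φ.Realize (fun i => x i n)
          (Fin.snoc (fun i => v i n) z), fun n hn => Classical.epsilon_spec hn⟩
      obtain ⟨n, h3, h4⟩ := ((h y).and hc).exists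
      exact hy n h4 h3
    · intro h y
      filter_upwards [h] with n hn using hn (y n)

lemma realize_seqGerm {k α : Type*} [Field k] (φ : Language.ring.Formula α) (x : α → ℕ → k) :
    φ.Realize (fun i => seqGerm k (x i)) ↔
      ∀ᶠ n in (hyperfilter ℕ : Filter ℕ), φ.Realize fun i => x i n := by
  have := boundedFormula_realize_seqGerm φ x default
  rw [Formula.Realize]
  simp only [Formula.Realize]
  convert this using 2
  funext n
  congr! 1

lemma realize_diag {k α : Type*} [Field k] (φ : Language.ring.Formula α) (x : α → k) :
    φ.Realize (fun i => diag k (x i)) ↔ φ.Realize x := by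
  have := realize_seqGerm φ fun i (_ : ℕ) => x i
  simp only [eventually_const] at this
  exact this

end Los

section CountableClosure

/-- A countable subset of a field lies in a countable relatively algebraically closed subfield. -/
lemma exists_countable_algClosed {K : Type*} [Field K] {T : Set K} (hT : T.Countable) :
    ∃ B : Subfield K, T ⊆ B ∧ (B : Set K).Countable ∧
      ∀ (q : K[X]) (x : K), q ≠ 0 → (∀ i, q.coeff i ∈ B) → q.eval x = 0 → x ∈ B := by
  have hcl : Countable (Subfield.closure T) := by
    have := hT.to_subtype
    have h : Cardinal.mk (Subfield.closure T) ≤ max (Cardinal.mk T) Cardinal.aleph0 :=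
      Subfield.cardinalMk_closure_le_max T
    rw [← Cardinal.mk_le_aleph0_iff]
    exact h.trans (max_le (Cardinal.mk_le_aleph0_iff.2 this) le_rfl)
  set F := Subfield.closure T
  refine ⟨(algebraicClosure F K).toSubfield, ?_, ?_, ?_⟩
  · intro x hx
    exact (algebraicClosure F K).algebraMap_mem ⟨x, Subfield.subset_closure hx⟩
  · have h := Algebra.IsAlgebraic.cardinalMk_le_max F (algebraicClosure F K)
    have h2 : Cardinal.mk (algebraicClosure F K) ≤ Cardinal.aleph0 :=
      h.trans (max_le (Cardinal.mk_le_aleph0_iff.2 hcl) le_rfl)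
    exact Set.countable_coe_iff.1 (Cardinal.mk_le_aleph0_iff.1 h2)
  · intro q x hq hc hx
    have hx' : IsAlgebraic (algebraicClosure F K) x := by
      have hl : q ∈ Polynomial.lifts (algebraMap (algebraicClosure F K) K) := by
        rw [Polynomial.lifts_iff_coeff_lifts]
        exact fun i => ⟨⟨_, hc i⟩, rfl⟩
      obtain ⟨r, rfl⟩ := hl
      refine ⟨r, ?_, ?_⟩
      · rintro rfl
        exact hq (by simp)
      · rw [← hx]
        simp [Polynomial.aeval_def, Polynomial.eval_map]
    have : IsAlgebraic F x := IsAlgebraic.restrictScalars F hx'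
    exact mem_algebraicClosure_iff.2 this

end CountableClosure

/-! ### Extending elementary partial maps of residue fields -/

noncomputable section ElemExt
open Filter FirstOrder FirstOrder.Language FirstOrder.Ring

universe u₁ u₂ v w

attribute [local instance] compatibleRingOfRing

section ExistsFormula

variable {α β : Type*} (Θ : Language.ring.Formula (α ⊕ β))

open Classical in
instance finite_occurring : Finite {b : β // Sum.inr b ∈ Θ.freeVarFinset} :=
  Finite.of_injective (β := Θ.freeVarFinset) (fun b => ⟨Sum.inr b.1, b.2⟩) fun b c h => by
    simpa [Subtype.ext_iff] using h

open Classical in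
/-- Existential quantification over all variables in `β`, of which only finitely many occur. -/
def exFormula : Language.ring.Formula α :=
  Formula.iExs {b : β // Sum.inr b ∈ Θ.freeVarFinset}
    (Θ.restrictFreeVar fun a => match a with
      | ⟨Sum.inl a, _⟩ => Sum.inl a
      | ⟨Sum.inr b, h⟩ => Sum.inr ⟨b, h⟩)

lemma realize_exFormula {R : Type*} [Field R] (a : α → R) :
    (exFormula Θ).Realize a ↔ ∃ b : β → R, Θ.Realize (Sum.elim a b) := by
  classical
  rw [exFormula, Formula.realize_iExs]
  constructor
  · rintro ⟨i, hi⟩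
    refine ⟨fun b => if h : Sum.inr b ∈ Θ.freeVarFinset then i ⟨b, h⟩ else 0, ?_⟩
    refine (BoundedFormula.realize_restrictFreeVar _ ?_).1 hi
    rintro ⟨a | b, h⟩
    · rfl
    · simp [h]
  · rintro ⟨b, hb⟩
    refine ⟨fun i => b i, ?_⟩
    refine (BoundedFormula.realize_restrictFreeVar _ ?_).2 hb
    rintro ⟨a | b, h⟩ <;> rfl

end ExistsFormula

instance ultraPerfect (p : ℕ) [Fact p.Prime] (κ : Type*) [Field κ] [CharP κ p] [PerfectRing κ p] :
    PerfectRing (Ultra κ) p := by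
  refine PerfectRing.ofSurjective _ _ fun y => ?_
  obtain ⟨f, rfl⟩ := seqGerm_surjective κ y
  obtain ⟨g, rfl⟩ := (PerfectRing.bijective_frobenius (R := ℕ → κ) (p := p)).surjective f
  exact ⟨seqGerm κ g, by simp [frobenius_def]⟩

section SubfieldLift

variable {K : Type u₁} [Field K] (B : Subfield K)

/-- The inclusion of a subfield, lifted to a larger universe. -/
def liftIncl : ULift.{w} B →+* K := B.subtype.comp (ULift.ringEquiv (R := B)).toRingHom

lemma liftIncl_surj {x : K} (hx : x ∈ B) : ∃ l : ULift.{w} B, liftIncl B l = x := ⟨⟨⟨x, hx⟩⟩, rfl⟩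

lemma liftIncl_mem (l : ULift.{w} B) : liftIncl B l ∈ B := l.down.2

lemma liftIncl_charP (p : ℕ) [CharP K p] : CharP (ULift.{w} B) p :=
  (RingHom.charP_iff (liftIncl B) (liftIncl B).injective p).2 inferInstance

lemma liftIncl_perfect (p : ℕ) [Fact p.Prime] [CharP K p] [CharP (ULift.{w} B) p]
    [PerfectRing K p]
    (hB : ∀ (q : K[X]) (x : K), q ≠ 0 → (∀ i, q.coeff i ∈ B) → q.eval x = 0 → x ∈ B) :
    PerfectRing (ULift.{w} B) p := by
  refine PerfectRing.ofSurjective _ _ fun y => ?_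
  obtain ⟨z, hz⟩ := (PerfectRing.bijective_frobenius (R := K) (p := p)).surjective (liftIncl B y)
  have hp := (Fact.out : p.Prime).pos
  have : z ∈ B := by
    refine hB (X ^ p - C (liftIncl B y)) z (X_pow_sub_C_ne_zero hp _) (fun i => ?_) ?_
    · rw [coeff_sub, coeff_X_pow, coeff_C]
      refine B.sub_mem ?_ ?_
      · split_ifs
        · exact B.one_mem
        · exact B.zero_mem
      · split_ifs
        · exact liftIncl_mem B y
        · exact B.zero_mem
    · simpa [frobenius_def, sub_eq_zero] using hz
  obtain ⟨l, rfl⟩ := liftIncl_surj.{u₁, w} B this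
  refine ⟨l, (liftIncl B).injective ?_⟩
  rw [← hz, frobenius_def, map_pow]

end SubfieldLift

variable {κ₁ : Type u₁} {κ₂ : Type u₂} [Field κ₁] [Field κ₂]

/-- The partial map `i₂ ∘ i₁⁻¹` between the two ultrapowers is elementary. -/
def IsElem {L : Type v} [Field L] (i₁ : L →+* Ultra κ₁) (i₂ : L →+* Ultra κ₂) : Prop :=
  ∀ φ : Language.ring.Formula L, φ.Realize i₁ ↔ φ.Realize i₂

/-- Countable saturation extends an elementary partial map with countable domain `L` to any larger
countable domain `L'`. -/
lemma IsElem.exists_map {L : Type v} [Field L] [Countable L] {i₁ : L →+* Ultra κ₁}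
    {i₂ : L →+* Ultra κ₂} (h : IsElem i₁ i₂) {L' : Type w} [Field L'] [Countable L']
    (i₁' : L' →+* Ultra κ₁) (j : L →+* L') (hj : i₁'.comp j = i₁) :
    ∃ i₂' : L' →+* Ultra κ₂, i₂'.comp j = i₂ ∧ IsElem i₁' i₂' := by
  classical
  choose a ha using fun l => seqGerm_surjective κ₂ (i₂ l)
  set P : ({φ : Language.ring.Formula L' // φ.Realize i₁'} ⊕ L) → ℕ → (L' → κ₂) → Prop :=
    fun i n x => match i with
      | Sum.inl φ => φ.1.Realize x
      | Sum.inr l => x (j l) = a l n with hP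
  obtain ⟨x, hx⟩ := exists_seq_of_finite P (by
    intro F
    -- The finite set `F` of conditions, as a formula in variables from `L` and `L'`.
    set θ : F → Language.ring.Formula (L ⊕ L') := fun i => match i.1 with
      | Sum.inl φ => φ.1.relabel Sum.inr
      | Sum.inr l => (Term.var (Sum.inr (j l))).equal (Term.var (Sum.inl l)) with hθ
    have h1 : (exFormula (Formula.iInf θ)).Realize i₁ := by
      rw [realize_exFormula]
      refine ⟨i₁', ?_⟩
      rw [Formula.realize_iInf]
      rintro ⟨φ | l, hi⟩
      · simp only [hθ, Formula.realize_relabel]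
        exact φ.2
      · simp only [hθ, Formula.realize_equal, Term.realize_var, Sum.elim_inl, Sum.elim_inr]
        rw [← hj]
        rfl
    rw [h, show (i₂ : L → Ultra κ₂) = fun l => seqGerm κ₂ (a l) from funext fun l => (ha l).symm,
      realize_seqGerm] at h1
    filter_upwards [h1] with n hn
    rw [realize_exFormula] at hn
    obtain ⟨b, hb⟩ := hn
    rw [Formula.realize_iInf] at hb
    refine ⟨b, ?_⟩
    rintro (φ | l) hi
    · have := hb ⟨_, hi⟩
      simp only [hθ, Formula.realize_relabel] at this
      exact this
    · have := hb ⟨_, hi⟩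
      simp only [hθ, Formula.realize_equal, Term.realize_var, Sum.elim_inl, Sum.elim_inr] at this
      exact this)
  set f : L' → Ultra κ₂ := fun l => seqGerm κ₂ fun n => x n l with hf
  have hreal : ∀ φ : Language.ring.Formula L', φ.Realize i₁' → φ.Realize f := by
    intro φ hφ
    rw [hf, realize_seqGerm]
    exact hx (Sum.inl ⟨φ, hφ⟩)
  refine ⟨⟨⟨⟨f, ?_⟩, ?_⟩, ?_, ?_⟩, ?_, ?_⟩
  · simpa using hreal ((Term.var 1).equal 1) (by simp)
  · intro b c
    exact Formula.realize_equal.1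
      (hreal ((Term.var (b * c)).equal (Term.var b * Term.var c)) (by simp))
  · simpa using hreal ((Term.var 0).equal 0) (by simp)
  · intro b c
    exact Formula.realize_equal.1
      (hreal ((Term.var (b + c)).equal (Term.var b + Term.var c)) (by simp))
  · ext l
    change seqGerm κ₂ (fun n => x n (j l)) = i₂ l
    rw [← ha, seqGerm_eq]
    exact hx (Sum.inr l)
  · intro φ
    refine ⟨hreal φ, fun h2 => ?_⟩
    by_contra h3
    have := hreal φ.not (by simpa [Formula.realize_not] using h3)
    rw [Formula.realize_not] at this
    exact this h2

/-- An elementary partial map extends to a countable perfect field whose image contains a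
prescribed countable set. -/
lemma IsElem.exists_extension {p : ℕ} [Fact p.Prime] [CharP κ₁ p] [PerfectRing κ₁ p]
    {L : Type v} [Field L] [Countable L] {i₁ : L →+* Ultra κ₁}
    {i₂ : L →+* Ultra κ₂} (h : IsElem i₁ i₂) {T : Set (Ultra κ₁)} (hT : T.Countable) :
    ∃ (L' : Type (max u₁ u₂)) (_ : Field L') (_ : Countable L') (_ : CharP L' p)
      (_ : PerfectRing L' p) (i₁' : L' →+* Ultra κ₁) (i₂' : L' →+* Ultra κ₂) (j : L →+* L'),
      i₁'.comp j = i₁ ∧ i₂'.comp j = i₂ ∧ IsElem i₁' i₂' ∧ ∀ t ∈ T, ∃ l, i₁' l = t := by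
  obtain ⟨B, hTB, hBc, hB⟩ := exists_countable_algClosed
    (hT.union (Set.countable_range (i₁ : L → Ultra κ₁)))
  have : Countable B := hBc.to_subtype
  have hch := liftIncl_charP.{u₁, u₂} B p
  have hpf := liftIncl_perfect.{u₁, u₂} B p hB
  have hr : ∀ l, i₁ l ∈ B := fun l => hTB (Or.inr ⟨l, rfl⟩)
  set j : L →+* ULift.{u₂} B :=
    (ULift.ringEquiv (R := B)).symm.toRingHom.comp (i₁.codRestrict B hr)
  have hj : (liftIncl.{u₁, u₂} B).comp j = i₁ := by
    ext l
    rfl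
  obtain ⟨i₂', h2, h3⟩ := h.exists_map (liftIncl.{u₁, u₂} B) j hj
  exact ⟨ULift.{u₂} B, inferInstance, inferInstance, hch, hpf, liftIncl B, i₂', j, hj, h2, h3,
    fun t ht => liftIncl_surj B (hTB (Or.inl ht))⟩

lemma IsElem.symm {L : Type v} [Field L] {i₁ : L →+* Ultra κ₁} {i₂ : L →+* Ultra κ₂}
    (h : IsElem i₁ i₂) : IsElem i₂ i₁ := fun φ => (h φ).symm

end ElemExt

/-! ### The back-and-forth argument -/

noncomputable section BackAndForth
open Filter FirstOrder FirstOrder.Language FirstOrder.Ring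

universe u₁ u₂

attribute [local instance] compatibleRingOfRing

variable {p : ℕ} [Fact p.Prime] {κ₁ : Type u₁} {κ₂ : Type u₂} [Field κ₁] [CharP κ₁ p]
  [PerfectRing κ₁ p] [Field κ₂] [CharP κ₂ p] [PerfectRing κ₂ p]

/-- The positions of the back-and-forth game: countable subrings of pairs respecting the leading
terms for some elementary partial map, with countable perfect domain, between the ultrapowers of
the residue fields. -/
def IsPosition (G : Subring (WUltra p κ₁ × WUltra p κ₂)) : Prop :=
  (G : Set (WUltra p κ₁ × WUltra p κ₂)).Countable ∧
  ∃ (L : Type (max u₁ u₂)) (_ : Field L) (_ : Countable L) (_ : CharP L p) (_ : PerfectRing L p)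
    (i₁ : L →+* Ultra κ₁) (i₂ : L →+* Ultra κ₂), IsElem i₁ i₂ ∧
    (G : Set (WUltra p κ₁ × WUltra p κ₂)) ⊆ (wittCorr i₁ i₂).M

lemma IsPosition.eq_iff {G : Subring (WUltra p κ₁ × WUltra p κ₂)} (hG : IsPosition G)
    {a b : WUltra p κ₁ × WUltra p κ₂} (ha : a ∈ G) (hb : b ∈ G) : a.1 = b.1 ↔ a.2 = b.2 := by
  obtain ⟨-, L, _, _, _, _, i₁, i₂, -, hM⟩ := hG
  have := (wittCorr i₁ i₂).zero_iff (hM (G.sub_mem ha hb))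
  rwa [Prod.fst_sub, Prod.snd_sub, sub_eq_zero, sub_eq_zero] at this

lemma IsPosition.swap {G : Subring (WUltra p κ₁ × WUltra p κ₂)} (hG : IsPosition G) :
    IsPosition (G.map (RingEquiv.prodComm (R := WUltra p κ₁) (S := WUltra p κ₂)).toRingHom) := by
  obtain ⟨hc, L, _, _, _, _, i₁, i₂, he, hM⟩ := hG
  refine ⟨by rw [Subring.coe_map]; exact hc.image _, L, inferInstance, inferInstance,
    inferInstance, inferInstance, i₂, i₁, he.symm, ?_⟩
  rintro _ ⟨a, ha, rfl⟩
  exact wittCorr_swap i₁ i₂ (hM ha)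

lemma IsPosition.forth {G : Subring (WUltra p κ₁ × WUltra p κ₂)} (hG : IsPosition G)
    (z : WUltra p κ₁) : ∃ G', G ≤ G' ∧ IsPosition G' ∧ ∃ y : WUltra p κ₂, (z, y) ∈ G' := by
  obtain ⟨hc, L, _, _, _, _, i₁, i₂, he, hM⟩ := hG
  obtain ⟨B, hGB, hBc, hB⟩ := exists_countable_algClosed
    ((hc.image Prod.fst).union (Set.countable_singleton z))
  have : Countable B := hBc.to_subtype
  choose γ u hu hb using fun b : {b : B // (b : WUltra p κ₁) ≠ 0} => exists_pPow_mul b.2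
  -- All coordinates of the leading terms of elements of `B`.
  obtain ⟨L', _, _, _, _, i₁', i₂', j, h1, h2, he', hT⟩ := he.exists_extension (p := p)
    (T := Set.range fun bi : {b : B // (b : WUltra p κ₁) ≠ 0} × ℕ =>
      (wittRed p κ₁ (u bi.1)).coeff bi.2) (Set.countable_range _)
  have hM' := hM.trans (wittCorr_mono i₁ i₂ i₁' i₂' j h1 h2)
  obtain ⟨G', hGG', hG'M, hG'B, hG'⟩ := (wittCorr i₁' i₂').exists_extension resCharZero_cval
    isHenselVal_cval isHenselVal_cval (wittCorr_saturated i₁' i₂') B hBc hB (by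
      intro x hx
      by_cases h0 : x = 0
      · exact ⟨0, Or.inl (by rw [h0]; rfl)⟩
      · have := exists_match_of_coeff i₁' i₂' (γ := γ ⟨⟨x, hx⟩, h0⟩) (hu ⟨⟨x, hx⟩, h0⟩)
          fun i => hT _ ⟨(⟨⟨x, hx⟩, h0⟩, i), rfl⟩
        rw [← hb] at this
        exact this) G hM' fun a ha => hGB (Or.inl ⟨a, ha, rfl⟩)
  refine ⟨G', hGG', ⟨?_, L', inferInstance, inferInstance, inferInstance, inferInstance, i₁', i₂',
    he', hG'M⟩, hG' z (hGB (Or.inr rfl))⟩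
  refine Set.MapsTo.countable_of_injOn (f := Prod.fst) (t := (B : Set _)) (fun a ha => hG'B a ha)
    (fun a ha b hb hab => Prod.ext hab ?_) hBc
  have := (wittCorr i₁' i₂').zero_iff (hG'M (G'.sub_mem ha hb))
  rw [Prod.fst_sub, Prod.snd_sub, sub_eq_zero, sub_eq_zero] at this
  exact this.1 hab

lemma IsPosition.back {G : Subring (WUltra p κ₁ × WUltra p κ₂)} (hG : IsPosition G)
    (z : WUltra p κ₂) : ∃ G', G ≤ G' ∧ IsPosition G' ∧ ∃ y : WUltra p κ₁, (y, z) ∈ G' := by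
  obtain ⟨G', h1, h2, y, h3⟩ := hG.swap.forth z
  refine ⟨_, fun a ha => ?_, h2.swap, y, ⟨_, h3, rfl⟩⟩
  exact ⟨_, h1 ⟨a, ha, rfl⟩, rfl⟩

/-- Entries of a position satisfy the same formulas on both sides. -/
theorem IsPosition.realize_iff {α : Type*} {m : ℕ} (φ : Language.ring.BoundedFormula α m)
    {G : Subring (WUltra p κ₁ × WUltra p κ₂)} (hG : IsPosition G)
    (x : α → WUltra p κ₁ × WUltra p κ₂) (hx : ∀ i, x i ∈ G)
    (v : Fin m → WUltra p κ₁ × WUltra p κ₂) (hv : ∀ i, v i ∈ G) :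
    φ.Realize (fun i => (x i).1) (fun i => (v i).1) ↔
      φ.Realize (fun i => (x i).2) (fun i => (v i).2) := by
  induction φ generalizing G with
  | falsum => rfl
  | equal t₁ t₂ =>
    set w : α ⊕ Fin _ → G := Sum.elim (fun i => ⟨x i, hx i⟩) fun i => ⟨v i, hv i⟩
    have h1 : (Sum.elim (fun i => (x i).1) fun i => (v i).1) =
        fun i => ((RingHom.fst _ _).comp G.subtype) (w i) := by ext i; cases i <;> rfl
    have h2 : (Sum.elim (fun i => (x i).2) fun i => (v i).2) =
        fun i => ((RingHom.snd _ _).comp G.subtype) (w i) := by ext i; cases i <;> rfl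
    simp only [BoundedFormula.Realize, h1, h2, term_realize_map]
    exact hG.eq_iff (t₁.realize w).2 (t₂.realize w).2
  | rel R => cases R
  | imp _ _ ih₁ ih₂ =>
    simp only [BoundedFormula.Realize, ih₁ hG hx v hv, ih₂ hG hx v hv]
  | @all m φ ih =>
    have h1 : ∀ y : WUltra p κ₁ × WUltra p κ₂, (fun i => ((Fin.snoc v y : Fin (m + 1) → _) i).1) =
        Fin.snoc (fun i => (v i).1) y.1 := by
      intro y
      funext i
      refine Fin.lastCases ?_ (fun i => ?_) i <;> simp
    have h2 : ∀ y : WUltra p κ₁ × WUltra p κ₂, (fun i => ((Fin.snoc v y : Fin (m + 1) → _) i).2) =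
        Fin.snoc (fun i => (v i).2) y.2 := by
      intro y
      funext i
      refine Fin.lastCases ?_ (fun i => ?_) i <;> simp
    have key : ∀ G' : Subring (WUltra p κ₁ × WUltra p κ₂), G ≤ G' → IsPosition G' →
        ∀ y ∈ G', φ.Realize (fun i => (x i).1) (Fin.snoc (fun i => (v i).1) y.1) ↔
          φ.Realize (fun i => (x i).2) (Fin.snoc (fun i => (v i).2) y.2) := by
      intro G' hle hG' y hy
      have := ih hG' (fun i => hle (hx i)) (Fin.snoc v y) (fun i => by
        refine Fin.lastCases ?_ (fun i => ?_) i
        · simpa using hy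
        · simpa using hle (hv i))
      rwa [h1, h2] at this
    simp only [BoundedFormula.Realize]
    constructor
    · intro h z
      obtain ⟨G', hle, hG', y, hy⟩ := hG.back z
      exact (key G' hle hG' _ hy).1 (h y)
    · intro h z
      obtain ⟨G', hle, hG', y, hy⟩ := hG.forth z
      exact (key G' hle hG' _ hy).2 (h y)

/-- The diagonal copy of `a = p ^ γ t` decomposes with the constant sequences at `γ` and `t`. -/
lemma diag_zpow_mul (κ : Type*) [Field κ] [CharP κ p] [PerfectRing κ p] (γ : ℤ)
    (t : WittVector p κ) :
    diag _ ((p : FractionRing (WittVector p κ)) ^ γ * algebraMap _ _ t) =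
      pPow p κ (fun _ => γ) * wittGerm p κ (WittVector.map (Pi.constRingHom ℕ κ) t) := by
  rw [pPow_const, map_mul, map_zpow₀, map_natCast, wittGerm_apply]
  congr 1

lemma wittRed_const (κ : Type*) [Field κ] [CharP κ p] [PerfectRing κ p] (t : WittVector p κ) :
    wittRed p κ (WittVector.map (Pi.constRingHom ℕ κ) t) = WittVector.map (diag κ) t := by
  ext i
  rfl

/-- The graph of the map induced by an elementary map `g` of residue fields has every countable part
contained in a position. -/
lemma exists_position (g : κ₁ →+* κ₂)
    (hg : ∀ (n : ℕ) (φ : Language.ring.Formula (Fin n)) (x : Fin n → κ₁),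
      φ.Realize (⇑g ∘ x) ↔ φ.Realize x)
    (F : FractionRing (WittVector p κ₁) →+* FractionRing (WittVector p κ₂))
    (hF : ∀ t : WittVector p κ₁, F (algebraMap _ _ t) = algebraMap _ _ (WittVector.map g t))
    {A : Set (FractionRing (WittVector p κ₁))} (hA : A.Countable) :
    ∃ G : Subring (WUltra p κ₁ × WUltra p κ₂), IsPosition G ∧
      ∀ a ∈ A, (diag _ a, diag _ (F a)) ∈ G := by
  classical
  obtain ⟨B, hAB, hBc, -⟩ := exists_countable_algClosed hA
  have : Countable B := hBc.to_subtype
  choose γ t ht hb using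
    fun b : {b : B // (b : FractionRing (WittVector p κ₁)) ≠ 0} => exists_zpow_mul b.2
  obtain ⟨C, hTC, hCc, hC⟩ := exists_countable_algClosed (T := Set.range
    fun bi : {b : B // (b : FractionRing (WittVector p κ₁)) ≠ 0} × ℕ => (t bi.1).coeff bi.2)
    (Set.countable_range _)
  have : Countable C := hCc.to_subtype
  have hch := liftIncl_charP.{u₁, u₂} C p
  have hpf := liftIncl_perfect.{u₁, u₂} C p hC
  set h : FractionRing (WittVector p κ₁) →+* WUltra p κ₁ × WUltra p κ₂ :=
    (diag _).prod ((diag _).comp F)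
  refine ⟨B.toSubring.map h, ⟨?_, ULift.{u₂} C, inferInstance, inferInstance, hch, hpf,
    (diag κ₁).comp (liftIncl C), (diag κ₂).comp (g.comp (liftIncl C)), ?_, ?_⟩, ?_⟩
  · rw [Subring.coe_map]
    exact hBc.image _
  · intro φ
    have h1 := realize_diag φ fun l => liftIncl.{u₁, u₂} C l
    have h2 := realize_diag φ fun l => g (liftIncl.{u₁, u₂} C l)
    refine (h1.trans ?_).trans h2.symm
    -- Only finitely many variables occur in `φ`.
    set e := Finset.equivFin φ.freeVarFinset
    have h3 := hg _ (φ.restrictFreeVar e) fun i => liftIncl.{u₁, u₂} C (e.symm i).1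
    have h4 : Formula.Realize (φ.restrictFreeVar e) (fun i => liftIncl.{u₁, u₂} C (e.symm i).1) ↔
        φ.Realize fun l => liftIncl.{u₁, u₂} C l :=
      BoundedFormula.realize_restrictFreeVar _ (by simp)
    have h5 : Formula.Realize (φ.restrictFreeVar e)
        (g ∘ fun i => liftIncl.{u₁, u₂} C (e.symm i).1) ↔
        φ.Realize fun l => g (liftIncl.{u₁, u₂} C l) :=
      BoundedFormula.realize_restrictFreeVar _ (by simp)
    exact (h4.symm.trans h3.symm).trans h5
  · rintro _ ⟨b, hbB, rfl⟩
    by_cases h0 : b = 0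
    · left
      rw [h0, map_zero]
    right
    set b' : {b : B // (b : FractionRing (WittVector p κ₁)) ≠ 0} := ⟨⟨b, hbB⟩, h0⟩
    choose s hs using fun i => liftIncl_surj.{u₁, u₂} C (hTC ⟨(b', i), rfl⟩)
    have hst : WittVector.map (liftIncl.{u₁, u₂} C) (WittVector.mk p s) = t b' := by
      ext i
      rw [WittVector.map_coeff, WittVector.coeff_mk, hs]
    have hbt : b = (p : FractionRing (WittVector p κ₁)) ^ γ b' * algebraMap _ _ (t b') := hb b'
    have hFb : F b = (p : FractionRing (WittVector p κ₂)) ^ γ b' *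
        algebraMap _ _ (WittVector.map g (t b')) := by
      rw [hbt, map_mul, map_zpow₀, map_natCast, hF]
    refine ⟨fun _ => γ b', WittVector.map (Pi.constRingHom ℕ κ₁) (t b'),
      WittVector.map (Pi.constRingHom ℕ κ₂) (WittVector.map g (t b')), WittVector.mk p s,
      Prod.ext ?_ ?_, ?_, ?_, ?_⟩
    · exact (congrArg (diag _) hbt).trans (diag_zpow_mul κ₁ _ _)
    · exact (congrArg (diag _) hFb).trans (diag_zpow_mul κ₂ _ _)
    · rw [wittRed_const, ← hst]
      ext i
      rfl
    · rw [wittRed_const, ← hst]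
      ext i
      rfl
    · intro h1
      rw [← map_eq_zero (liftIncl.{u₁, u₂} C), ← WittVector.map_coeff, hst] at h1
      exact ht b' h1
  · exact fun a ha => ⟨a, hAB ha, rfl⟩

/-- Elementarity of any map of fraction fields compatible with an elementary map of residue
fields. -/
theorem realize_fractionRing_iff (g : κ₁ →+* κ₂)
    (hg : ∀ (n : ℕ) (φ : Language.ring.Formula (Fin n)) (x : Fin n → κ₁),
      φ.Realize (⇑g ∘ x) ↔ φ.Realize x)
    (F : FractionRing (WittVector p κ₁) →+* FractionRing (WittVector p κ₂))
    (hF : ∀ t : WittVector p κ₁, F (algebraMap _ _ t) = algebraMap _ _ (WittVector.map g t))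
    (n : ℕ) (φ : Language.ring.Formula (Fin n)) (x : Fin n → FractionRing (WittVector p κ₁)) :
    φ.Realize (⇑F ∘ x) ↔ φ.Realize x := by
  obtain ⟨G, hG, hxG⟩ := exists_position g hg F hF (Set.countable_range x)
  have h := hG.realize_iff φ (fun i => (diag _ (x i), diag _ (F (x i)))) (fun i => hxG _ ⟨i, rfl⟩)
    default (fun i => i.elim0)
  have h1 := realize_diag φ x
  have h2 := realize_diag φ (F ∘ x)
  rw [← h1, ← h2]
  refine Iff.trans ?_ (h.symm.trans ?_)
  · rw [Formula.boundedFormula_realize_eq_realize]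
    rfl
  · rw [Formula.boundedFormula_realize_eq_realize]

end BackAndForth

end Proof

/-- Let `p` be a prime and `k₁ ⊆ k₂` perfect fields of characteristic `p`
such that `k₁` is an elementary substructure of `k₂` in the language of rings.  Then the
induced embedding of the fraction field of `W(k₁)` into the fraction field of `W(k₂)` is
elementary in the language of rings. -/
theorem witt_fraction_field_embedding_elementary
    (g : k₁ →+* k₂)
    (helem : ∀ (n : ℕ) (φ : Language.ring.Formula (Fin n)) (x : Fin n → k₁),
      letI := compatibleRingOfRing k₁
      letI := compatibleRingOfRing k₂
      φ.Realize (⇑g ∘ x) ↔ φ.Realize x) :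
    ∀ (n : ℕ) (φ : Language.ring.Formula (Fin n))
      (x : Fin n → FractionRing (WittVector p k₁)),
      letI := compatibleRingOfRing (FractionRing (WittVector p k₁))
      letI := compatibleRingOfRing (FractionRing (WittVector p k₂))
      φ.Realize (⇑(wittFractionMap p k₁ k₂ g) ∘ x) ↔ φ.Realize x := by
  intro n φ x
  exact realize_fractionRing_iff g helem (wittFractionMap p k₁ k₂ g)
    (fun t => IsFractionRing.lift_algebraMap _ t) n φ x

end
end
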